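/- arXiv:math/0010330 — 4 statements merged into one kernel-verified Lean document; each statement's English description precedes it below -/
import Mathlib

section
/- For each integer m ≥ 0, the algebra homomorphism ρ_m : A_t → M_{m+1}(ℂ) is surjective. -/
open scoped TensorProduct
open Complex

noncomputable section

/-- The four generators `X`, `Y`, `K`, `K⁻¹` of the algebra `Aₜ`. -/
inductive QGen : Type
  | X | Y | K | K'
  deriving DecidableEq

/-- The image of a generator in the free algebra on the generators. -/
def qg (x : QGen) : FreeAlgebra ℂ QGen := FreeAlgebra.ι ℂ x

/-- The defining relations of `Aₜ`:
`KX = t²XK`, `KY = t⁻²YK`, `XY − YX = (K² − K⁻²)/(t² − t⁻²)`, `KK⁻¹ = K⁻¹K = 1`. -/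
inductive QRel (t : ℂ) : FreeAlgebra ℂ QGen → FreeAlgebra ℂ QGen → Prop
  | KX : QRel t (qg .K * qg .X) ((t ^ 2 : ℂ) • (qg .X * qg .K))
  | KY : QRel t (qg .K * qg .Y) ((t⁻¹ ^ 2 : ℂ) • (qg .Y * qg .K))
  | XY : QRel t (qg .X * qg .Y - qg .Y * qg .X)
      (((t ^ 2 - t⁻¹ ^ 2)⁻¹ : ℂ) • (qg .K * qg .K - qg .K' * qg .K'))
  | KK' : QRel t (qg .K * qg .K') 1
  | K'K : QRel t (qg .K' * qg .K) 1

/-- The algebra `Aₜ`: the quotient of the free algebra by the defining relations. -/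
abbrev At (t : ℂ) : Type := RingQuot (QRel t)

/-- The generator `X` in `Aₜ`. -/
def aX (t : ℂ) : At t := RingQuot.mkAlgHom ℂ (QRel t) (qg .X)
/-- The generator `Y` in `Aₜ`. -/
def aY (t : ℂ) : At t := RingQuot.mkAlgHom ℂ (QRel t) (qg .Y)
/-- The generator `K` in `Aₜ`. -/
def aK (t : ℂ) : At t := RingQuot.mkAlgHom ℂ (QRel t) (qg .K)
/-- The generator `K⁻¹` in `Aₜ`. -/
def aK' (t : ℂ) : At t := RingQuot.mkAlgHom ℂ (QRel t) (qg .K')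

/-- The quantum integer `[n] = (t^{2n} − t^{−2n})/(t² − t⁻²)`. -/
def qint (t : ℂ) (n : ℤ) : ℂ := (t ^ (2 * n) - t ^ (-(2 * n))) / (t ^ 2 - t⁻¹ ^ 2)

/-- The matrix of `ρ_m(K)`: `K e_j = t^{m−2j} e_j`. -/
def Kmat (t : ℂ) (m : ℕ) : Matrix (Fin (m + 1)) (Fin (m + 1)) ℂ :=
  Matrix.diagonal fun j => t ^ ((m : ℤ) - 2 * (j : ℤ))

/-- The matrix of `ρ_m(K⁻¹)`: `K⁻¹ e_j = t^{−(m−2j)} e_j`. -/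
def K'mat (t : ℂ) (m : ℕ) : Matrix (Fin (m + 1)) (Fin (m + 1)) ℂ :=
  Matrix.diagonal fun j => t ^ (-((m : ℤ) - 2 * (j : ℤ)))

/-- The matrix of `ρ_m(X)`: `X e_j = [j] e_{j−1}` (with `e_{−1} = 0`). -/
def Xmat (t : ℂ) (m : ℕ) : Matrix (Fin (m + 1)) (Fin (m + 1)) ℂ :=
  Matrix.of fun i j => if (j : ℕ) = (i : ℕ) + 1 then qint t (j : ℤ) else 0

/-- The matrix of `ρ_m(Y)`: `Y e_j = [m−j] e_{j+1}` (with `e_{m+1} = 0`). -/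
def Ymat (t : ℂ) (m : ℕ) : Matrix (Fin (m + 1)) (Fin (m + 1)) ℂ :=
  Matrix.of fun i j => if (i : ℕ) = (j : ℕ) + 1 then qint t ((m : ℤ) - (j : ℤ)) else 0

/-- `ρ` is the representation `ρ_m : Aₜ → M_{m+1}(ℂ)` determined by the matrices above. -/
def IsRho (t : ℂ) (m : ℕ) (ρ : At t →ₐ[ℂ] Matrix (Fin (m + 1)) (Fin (m + 1)) ℂ) : Prop :=
  ρ (aX t) = Xmat t m ∧ ρ (aY t) = Ymat t m ∧ ρ (aK t) = Kmat t m ∧ ρ (aK' t) = K'mat t m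

theorem zpow_inj_aux (t : ℂ) (ht : t ≠ 0) (hroot : ∀ k : ℕ, 0 < k → t ^ k ≠ 1) (a b : ℤ)
    (h : t ^ a = t ^ b) : a = b := by
  have key : ∀ c d : ℤ, t ^ c = t ^ d → ¬ c < d := by
    intro c d hcd hlt
    apply hroot (d - c).toNat (by omega)
    rw [← zpow_natCast, Int.toNat_of_nonneg (by omega), zpow_sub₀ ht, hcd]
    exact div_self (zpow_ne_zero _ ht)
  have h1 := key a b h
  have h2 := key b a h.symm
  omega

theorem qint_ne_zero_aux (t : ℂ) (ht : t ≠ 0) (hroot : ∀ k : ℕ, 0 < k → t ^ k ≠ 1) (n : ℤ)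
    (hn : n ≠ 0) : qint t n ≠ 0 := by
  unfold qint
  apply div_ne_zero
  · intro h
    have := zpow_inj_aux t ht hroot _ _ (sub_eq_zero.mp h)
    omega
  · intro h
    have h2 : t ^ (2 : ℤ) = t ^ (-2 : ℤ) := by
      have := sub_eq_zero.mp h
      rw [zpow_neg, ← inv_zpow]
      exact_mod_cast this
    have := zpow_inj_aux t ht hroot _ _ h2
    omega

theorem diag_single_mem_aux {n : ℕ} (S : Subalgebra ℂ (Matrix (Fin n) (Fin n) ℂ)) (v : Fin n → ℂ)
    (hv : Function.Injective v) (hS : Matrix.diagonal v ∈ S) (i : Fin n) :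
    Matrix.single i i (1 : ℂ) ∈ S := by
  have h : Polynomial.aeval (Matrix.diagonal v) (Lagrange.basis Finset.univ v i) ∈ S :=
    Algebra.adjoin_le (Set.singleton_subset_iff.mpr hS) (Polynomial.aeval_mem_adjoin_singleton ℂ _)
  have e : Polynomial.aeval (Matrix.diagonal v) (Lagrange.basis Finset.univ v i)
      = Matrix.single i i (1 : ℂ) := by
    have h1 : Matrix.diagonal v = Matrix.diagonalAlgHom ℂ v := rfl
    rw [h1, Polynomial.aeval_algHom_apply, ← Matrix.diagonal_single]
    change Matrix.diagonal _ = _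
    congr 1
    funext j
    have h2 : Polynomial.aeval v (Lagrange.basis Finset.univ v i) j
      = Polynomial.aeval (v j) (Lagrange.basis Finset.univ v i) :=
      (Polynomial.aeval_algHom_apply (Pi.evalAlgHom ℂ (fun _ : Fin n => ℂ) j) v _).symm
    rw [h2, Polynomial.coe_aeval_eq_eval]
    by_cases hij : i = j
    · subst hij
      rw [Lagrange.eval_basis_self hv.injOn (Finset.mem_univ _)]
      simp
    · rw [Lagrange.eval_basis_of_ne hij (Finset.mem_univ _)]
      simp [Pi.single_apply, Ne.symm hij]
  rwa [e] at h

theorem single_mem_aux {n : ℕ} (S : Subalgebra ℂ (Matrix (Fin n) (Fin n) ℂ))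
    (hd : ∀ i, Matrix.single i i (1 : ℂ) ∈ S) (M : Matrix (Fin n) (Fin n) ℂ) (hM : M ∈ S)
    (i j : Fin n) (h : M i j ≠ 0) : Matrix.single i j (1 : ℂ) ∈ S := by
  have h1 := S.smul_mem (S.mul_mem (S.mul_mem (hd i) hM) (hd j)) (M i j)⁻¹
  rw [Matrix.single_mul_mul_single] at h1
  simpa [Matrix.smul_single, h] using h1

/-- For each `m ≥ 0`, the algebra homomorphism `ρ_m : Aₜ → M_{m+1}(ℂ)`
is surjective. -/
theorem stmt2 (t : ℂ) (ht : t ≠ 0) (hroot : ∀ k : ℕ, 0 < k → t ^ k ≠ 1) (m : ℕ)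
    (ρ : At t →ₐ[ℂ] Matrix (Fin (m + 1)) (Fin (m + 1)) ℂ) (hρ : IsRho t m ρ) :
    Function.Surjective ρ := by
  obtain ⟨hX, hY, hK, -⟩ := hρ
  rw [← AlgHom.range_eq_top]
  have mX : Xmat t m ∈ ρ.range := ⟨_, hX⟩
  have mY : Ymat t m ∈ ρ.range := ⟨_, hY⟩
  have mK : Kmat t m ∈ ρ.range := ⟨_, hK⟩
  generalize ρ.range = S at *
  have hd : ∀ i, Matrix.single i i (1 : ℂ) ∈ S := by
    apply diag_single_mem_aux S _ _ mK
    intro a b hab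
    have := zpow_inj_aux t ht hroot _ _ hab
    apply Fin.ext
    omega
  have up : ∀ i j : Fin (m + 1), (j : ℕ) = i + 1 → Matrix.single i j (1 : ℂ) ∈ S := by
    intro i j hij
    apply single_mem_aux S hd _ mX
    simp only [Xmat, Matrix.of_apply, if_pos hij]
    exact qint_ne_zero_aux t ht hroot _ (by omega)
  have down : ∀ i j : Fin (m + 1), (i : ℕ) = j + 1 → Matrix.single i j (1 : ℂ) ∈ S := by
    intro i j hij
    apply single_mem_aux S hd _ mY
    simp only [Ymat, Matrix.of_apply, if_pos hij]
    exact qint_ne_zero_aux t ht hroot _ (by omega)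
  have tr : ∀ i j k : Fin (m + 1), Matrix.single i j (1 : ℂ) ∈ S →
      Matrix.single j k (1 : ℂ) ∈ S → Matrix.single i k (1 : ℂ) ∈ S := by
    intro i j k h1 h2
    simpa using S.mul_mem h1 h2
  have both : ∀ n : ℕ, ∀ i j : Fin (m + 1), (j : ℕ) = i + n →
      Matrix.single i j (1 : ℂ) ∈ S ∧ Matrix.single j i (1 : ℂ) ∈ S := by
    intro n
    induction n with
    | zero =>
      intro i j hij
      have : j = i := Fin.ext hij
      subst this
      exact ⟨hd _, hd _⟩
    | succ n ih =>
      intro i j hij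
      have hk : (i : ℕ) + n < m + 1 := by omega
      obtain ⟨h1, h2⟩ := ih i ⟨i + n, hk⟩ rfl
      exact ⟨tr _ _ _ h1 (up _ _ hij), tr _ _ _ (down _ _ hij) h2⟩
  have all : ∀ i j : Fin (m + 1), Matrix.single i j (1 : ℂ) ∈ S := by
    intro i j
    rcases le_total (i : ℕ) j with h | h
    · exact (both (j - i) i j (by omega)).1
    · exact (both (i - j) j i (by omega)).2
  rw [eq_top_iff]
  intro M _
  rw [Matrix.matrix_eq_sum_single M]
  refine S.sum_mem fun i _ => S.sum_mem fun j _ => ?_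
  simpa [Matrix.smul_single] using S.smul_mem (all i j) (M i j)

end
end

section
/- The algebra homomorphism Θ : A_t → ∏_{m≥0} M_{m+1}(ℂ) defined by Θ(Z) = (ρ_0(Z), ρ_1(Z), ρ_2(Z), …) is injective. -/
open scoped TensorProduct
open Complex

noncomputable section

section Helpers

variable {t : ℂ}

lemma rKX (t : ℂ) : aK t * aX t = (t ^ 2 : ℂ) • (aX t * aK t) := by
  have h := RingQuot.mkAlgHom_rel ℂ (QRel.KX (t := t))
  simp only [map_mul, map_smul] at h
  exact h

lemma rKY (t : ℂ) : aK t * aY t = (t⁻¹ ^ 2 : ℂ) • (aY t * aK t) := by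
  have h := RingQuot.mkAlgHom_rel ℂ (QRel.KY (t := t))
  simp only [map_mul, map_smul] at h
  exact h

lemma rXY (t : ℂ) : aX t * aY t - aY t * aX t =
    ((t ^ 2 - t⁻¹ ^ 2)⁻¹ : ℂ) • (aK t * aK t - aK' t * aK' t) := by
  have h := RingQuot.mkAlgHom_rel ℂ (QRel.XY (t := t))
  simp only [map_mul, map_smul, map_sub] at h
  exact h

lemma rKK' (t : ℂ) : aK t * aK' t = 1 := by
  have h := RingQuot.mkAlgHom_rel ℂ (QRel.KK' (t := t))
  simp only [map_mul, map_one] at h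
  exact h

lemma rKinvK (t : ℂ) : aK' t * aK t = 1 := by
  have h := RingQuot.mkAlgHom_rel ℂ (QRel.K'K (t := t))
  simp only [map_mul, map_one] at h
  exact h

/-- `K` as a unit. -/
def uK (t : ℂ) : (At t)ˣ := ⟨aK t, aK' t, rKK' t, rKinvK t⟩

/-- The monomial `Y^a K^k X^b`. -/
def mon (t : ℂ) (x : ℕ × ℤ × ℕ) : At t :=
  aY t ^ x.1 * ((uK t ^ x.2.1 : (At t)ˣ) : At t) * aX t ^ x.2.2

/-- The span of the monomials. -/
def SS (t : ℂ) : Submodule ℂ (At t) := Submodule.span ℂ (Set.range (mon t))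

lemma mon_mem (a : ℕ) (k : ℤ) (b : ℕ) :
    aY t ^ a * ((uK t ^ k : (At t)ˣ) : At t) * aX t ^ b ∈ SS t :=
  Submodule.subset_span ⟨(a, k, b), rfl⟩

lemma left_closed (g : At t) (h : ∀ x, g * mon t x ∈ SS t) (z : At t) (hz : z ∈ SS t) :
    g * z ∈ SS t := by
  induction hz using Submodule.span_induction with
  | mem x hx => obtain ⟨y, rfl⟩ := hx; exact h y
  | zero => simp
  | add x y _ _ hx hy => rw [mul_add]; exact add_mem hx hy
  | smul c x _ hx => rw [mul_smul_comm]; exact Submodule.smul_mem _ _ hx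

lemma Y_closed (z : At t) (hz : z ∈ SS t) : aY t * z ∈ SS t := by
  refine left_closed _ ?_ z hz
  rintro ⟨a, k, b⟩
  have := mon_mem (t := t) (a + 1) k b
  rw [pow_succ'] at this
  simpa [mon, mul_assoc] using this

lemma K_Ypow (ht : t ≠ 0) (a : ℕ) : ∃ c : ℂ, aK t * aY t ^ a = c • (aY t ^ a * aK t) := by
  induction a with
  | zero => exact ⟨1, by simp⟩
  | succ a ih =>
    obtain ⟨c, hc⟩ := ih
    refine ⟨c * t⁻¹ ^ 2, ?_⟩
    rw [pow_succ, ← mul_assoc, hc, smul_mul_assoc, mul_assoc, rKY, mul_smul_comm, smul_smul,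
      mul_assoc]

lemma K'Y (ht : t ≠ 0) : aK' t * aY t = (t ^ 2 : ℂ) • (aY t * aK' t) := by
  have h : aK' t * (aK t * aY t) * aK' t = aK' t * ((t⁻¹ ^ 2 : ℂ) • (aY t * aK t)) * aK' t := by
    rw [rKY]
  rw [← mul_assoc, rKinvK, one_mul, mul_smul_comm, smul_mul_assoc, mul_assoc, mul_assoc, rKK',
    mul_one] at h
  rw [h, smul_smul]
  rw [← mul_pow, mul_inv_cancel₀ ht]
  simp

lemma XK (ht : t ≠ 0) : aX t * aK t = (t⁻¹ ^ 2 : ℂ) • (aK t * aX t) := by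
  rw [rKX, smul_smul, ← mul_pow, inv_mul_cancel₀ ht]
  simp

lemma XK' (ht : t ≠ 0) : aX t * aK' t = (t ^ 2 : ℂ) • (aK' t * aX t) := by
  have h : aK' t * (aK t * aX t) * aK' t = aK' t * ((t ^ 2 : ℂ) • (aX t * aK t)) * aK' t := by
    rw [rKX]
  rw [← mul_assoc, rKinvK, one_mul, mul_smul_comm, smul_mul_assoc, mul_assoc, mul_assoc, rKK',
    mul_one] at h
  exact h

lemma K'_Ypow (ht : t ≠ 0) (a : ℕ) : ∃ c : ℂ, aK' t * aY t ^ a = c • (aY t ^ a * aK' t) := by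
  induction a with
  | zero => exact ⟨1, by simp⟩
  | succ a ih =>
    obtain ⟨c, hc⟩ := ih
    refine ⟨c * t ^ 2, ?_⟩
    rw [pow_succ, ← mul_assoc, hc, smul_mul_assoc, mul_assoc, K'Y ht, mul_smul_comm, smul_smul,
      mul_assoc]

lemma K_closed (ht : t ≠ 0) (z : At t) (hz : z ∈ SS t) : aK t * z ∈ SS t := by
  refine left_closed _ ?_ z hz
  rintro ⟨a, k, b⟩
  obtain ⟨c, hc⟩ := K_Ypow ht a
  have h2 : aK t * ((uK t ^ k : (At t)ˣ) : At t) = ((uK t ^ (1 + k) : (At t)ˣ) : At t) := by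
    rw [zpow_add, zpow_one, Units.val_mul]; rfl
  have := Submodule.smul_mem _ c (mon_mem (t := t) a (1 + k) b)
  simp only [mon]
  rw [← mul_assoc, ← mul_assoc, hc, smul_mul_assoc, smul_mul_assoc, mul_assoc (aY t ^ a), h2]
  exact this

lemma K'_closed (ht : t ≠ 0) (z : At t) (hz : z ∈ SS t) : aK' t * z ∈ SS t := by
  refine left_closed _ ?_ z hz
  rintro ⟨a, k, b⟩
  obtain ⟨c, hc⟩ := K'_Ypow ht a
  have h2 : aK' t * ((uK t ^ k : (At t)ˣ) : At t) = ((uK t ^ (-1 + k) : (At t)ˣ) : At t) := by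
    rw [zpow_add, zpow_neg_one, Units.val_mul]; rfl
  have := Submodule.smul_mem _ c (mon_mem (t := t) a (-1 + k) b)
  simp only [mon]
  rw [← mul_assoc, ← mul_assoc, hc, smul_mul_assoc, smul_mul_assoc, mul_assoc (aY t ^ a), h2]
  exact this

lemma X_Kpow (ht : t ≠ 0) (k : ℤ) : ∃ c : ℂ, aX t * ((uK t ^ k : (At t)ˣ) : At t) =
    c • (((uK t ^ k : (At t)ˣ) : At t) * aX t) := by
  induction k using Int.induction_on with
  | zero => exact ⟨1, by simp⟩
  | succ i ih =>
    obtain ⟨c, hc⟩ := ih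
    refine ⟨c * t⁻¹ ^ 2, ?_⟩
    have e : ((uK t : (At t)ˣ) : At t) = aK t := rfl
    rw [zpow_add, zpow_one, Units.val_mul, e, ← mul_assoc, hc, smul_mul_assoc, mul_assoc, XK ht,
      mul_smul_comm, smul_smul, mul_assoc]
  | pred i ih =>
    obtain ⟨c, hc⟩ := ih
    refine ⟨c * t ^ 2, ?_⟩
    have e : (((uK t)⁻¹ : (At t)ˣ) : At t) = aK' t := rfl
    rw [zpow_sub, zpow_one, Units.val_mul, e, ← mul_assoc, hc, smul_mul_assoc, mul_assoc, XK' ht,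
      mul_smul_comm, smul_smul, mul_assoc]

lemma X_closed (ht : t ≠ 0) (z : At t) (hz : z ∈ SS t) : aX t * z ∈ SS t := by
  refine left_closed _ ?_ z hz
  rintro ⟨a, k, b⟩
  simp only [mon]
  induction a with
  | zero =>
    obtain ⟨c, hc⟩ := X_Kpow ht k
    have := Submodule.smul_mem _ c (mon_mem (t := t) 0 k (b + 1))
    rw [pow_zero, one_mul, ← mul_assoc, hc, smul_mul_assoc, mul_assoc, ← pow_succ']
    simpa using this
  | succ a ih =>
    have h1 : aX t * aY t = aY t * aX t +
        ((t ^ 2 - t⁻¹ ^ 2)⁻¹ : ℂ) • (aK t * aK t - aK' t * aK' t) := by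
      rw [← rXY]; abel
    have hm := mon_mem (t := t) a k b
    set w := aY t ^ a * ((uK t ^ k : (At t)ˣ) : At t) * aX t ^ b with hw
    have h2 : aX t * (aY t ^ (a + 1) * ((uK t ^ k : (At t)ˣ) : At t) * aX t ^ b) =
        aY t * (aX t * w) + ((t ^ 2 - t⁻¹ ^ 2)⁻¹ : ℂ) • (aK t * (aK t * w) - aK' t * (aK' t * w)) := by
      rw [pow_succ']
      have : aX t * (aY t * aY t ^ a * ((uK t ^ k : (At t)ˣ) : At t) * aX t ^ b)
        = (aX t * aY t) * w := by rw [hw]; simp only [mul_assoc]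
      rw [this, h1, add_mul, smul_mul_assoc, sub_mul]
      simp only [mul_assoc]
    rw [h2]
    exact add_mem (Y_closed _ ih) (Submodule.smul_mem _ _ (sub_mem
      (K_closed ht _ (K_closed ht _ hm)) (K'_closed ht _ (K'_closed ht _ hm))))

lemma SS_top (ht : t ≠ 0) (z : At t) : z ∈ SS t := by
  obtain ⟨p, rfl⟩ := RingQuot.mkAlgHom_surjective ℂ (QRel t) z
  have key : ∀ w ∈ SS t, RingQuot.mkAlgHom ℂ (QRel t) p * w ∈ SS t := by
    induction p using FreeAlgebra.induction with
    | grade0 r =>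
      intro w hw
      rw [AlgHom.commutes, ← Algebra.smul_def]
      exact Submodule.smul_mem _ _ hw
    | grade1 x =>
      intro w hw
      cases x
      · exact X_closed ht w hw
      · exact Y_closed w hw
      · exact K_closed ht w hw
      · exact K'_closed ht w hw
    | mul a b ha hb =>
      intro w hw
      rw [map_mul, mul_assoc]
      exact ha _ (hb _ hw)
    | add a b ha hb =>
      intro w hw
      rw [map_add, add_mul]
      exact add_mem (ha _ hw) (hb _ hw)
  have h1 : (1 : At t) ∈ SS t := by simpa using mon_mem (t := t) 0 0 0
  simpa using key 1 h1

lemma zpow_inj_t (ht : t ≠ 0) (hroot : ∀ k : ℕ, 0 < k → t ^ k ≠ 1) :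
    Function.Injective (fun k : ℤ => t ^ k) := by
  have key : ∀ k l : ℤ, k < l → t ^ k ≠ t ^ l := by
    intro k l hkl h
    apply hroot (l - k).toNat (by omega)
    rw [← zpow_natCast, Int.toNat_of_nonneg (by omega), zpow_sub₀ ht, h,
      div_self (zpow_ne_zero _ ht)]
  intro k l h
  rcases lt_trichotomy k l with h1 | h1 | h1
  · exact absurd h (key _ _ h1)
  · exact h1
  · exact absurd h.symm (key _ _ h1)

lemma qint_ne (ht : t ≠ 0) (hroot : ∀ k : ℕ, 0 < k → t ^ k ≠ 1) (n : ℤ) (hn : n ≠ 0) :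
    qint t n ≠ 0 := by
  have inj := zpow_inj_t ht hroot
  refine div_ne_zero (sub_ne_zero.2 fun h => ?_) (sub_ne_zero.2 fun h => ?_)
  · have := inj h
    omega
  · have h' : t ^ (2 : ℤ) = t ^ (-2 : ℤ) := by
      rw [zpow_neg]
      simpa [← inv_pow] using h
    have := inj h'
    omega

/-- Basis vectors, zero out of range. -/
def ev (m j : ℕ) : Fin (m + 1) → ℂ := fun i => if (i : ℕ) = j then 1 else 0

lemma mulVec_ev (m j : ℕ) (hj : j ≤ m) (M : Matrix (Fin (m + 1)) (Fin (m + 1)) ℂ)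
    (i : Fin (m + 1)) : (M.mulVec (ev m j)) i = M i ⟨j, by omega⟩ := by
  have : ev m j = Pi.single (⟨j, by omega⟩ : Fin (m + 1)) 1 := by
    ext i
    simp [ev, Pi.single_apply, Fin.ext_iff]
  rw [this]
  simp

lemma X_ev_succ (m j : ℕ) (hj : j + 1 ≤ m) :
    (Xmat t m).mulVec (ev m (j + 1)) = qint t ((j : ℤ) + 1) • ev m j := by
  ext i
  rw [mulVec_ev m _ hj]
  simp [Xmat, ev, eq_comm]

lemma X_ev_zero (m : ℕ) : (Xmat t m).mulVec (ev m 0) = 0 := by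
  ext i
  rw [mulVec_ev m _ (Nat.zero_le _)]
  simp [Xmat]

lemma Y_ev (m j : ℕ) :
    (Ymat t m).mulVec (ev m j) = qint t ((m : ℤ) - j) • ev m (j + 1) := by
  by_cases hj : j ≤ m
  · ext i
    rw [mulVec_ev m _ hj]
    simp [Ymat, ev]
  · have h1 : ev m j = 0 := by
      ext i; have := i.2; simp [ev]; omega
    have h2 : ev m (j + 1) = 0 := by
      ext i; have := i.2; simp [ev]; omega
    simp [h1, h2]

lemma K_ev (m : ℕ) : (Kmat t m).mulVec (ev m 0) = (t ^ m) • ev m 0 := by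
  ext i
  rw [mulVec_ev m _ (Nat.zero_le _)]
  by_cases h : i = 0
  · subst h; simp [Kmat, ev]
  · have h' : (i : ℕ) ≠ 0 := fun h0 => h (Fin.ext h0)
    simp [Kmat, ev, Matrix.diagonal_apply, h, h']

lemma K'_ev (m : ℕ) : (K'mat t m).mulVec (ev m 0) = (t ^ m)⁻¹ • ev m 0 := by
  ext i
  rw [mulVec_ev m _ (Nat.zero_le _)]
  by_cases h : i = 0
  · subst h; simp [K'mat, ev]
  · have h' : (i : ℕ) ≠ 0 := fun h0 => h (Fin.ext h0)
    simp [K'mat, ev, Matrix.diagonal_apply, h, h']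

lemma Xpow_zero (m b j : ℕ) (hj : j ≤ m) (h : j < b) :
    (Xmat t m ^ b).mulVec (ev m j) = 0 := by
  induction b generalizing j with
  | zero => omega
  | succ b ih =>
    rw [pow_succ, ← Matrix.mulVec_mulVec]
    cases j with
    | zero => rw [X_ev_zero, Matrix.mulVec_zero]
    | succ j =>
      rw [X_ev_succ m j hj, Matrix.mulVec_smul, ih j (by omega) (by omega), smul_zero]

lemma Xpow_self (m b : ℕ) (hb : b ≤ m) :
    (Xmat t m ^ b).mulVec (ev m b) = (∏ i ∈ Finset.range b, qint t ((i : ℤ) + 1)) • ev m 0 := by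
  induction b with
  | zero => simp
  | succ b ih =>
    rw [pow_succ, ← Matrix.mulVec_mulVec, X_ev_succ m b hb, Matrix.mulVec_smul, ih (by omega),
      smul_smul, Finset.prod_range_succ, mul_comm]

lemma Ypow_ev (m a : ℕ) : (Ymat t m ^ a).mulVec (ev m 0) =
    (∏ i ∈ Finset.range a, qint t ((m : ℤ) - i)) • ev m a := by
  induction a with
  | zero => simp
  | succ a ih =>
    rw [pow_succ', ← Matrix.mulVec_mulVec, ih, Matrix.mulVec_smul, Y_ev, smul_smul,
      Finset.prod_range_succ]

lemma Kpow_ev (ht : t ≠ 0) (m : ℕ) (ρ : At t →ₐ[ℂ] Matrix (Fin (m + 1)) (Fin (m + 1)) ℂ)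
    (hρ : IsRho t m ρ) (k : ℤ) :
    (ρ ((uK t ^ k : (At t)ˣ) : At t)).mulVec (ev m 0) = ((t ^ m) ^ k) • ev m 0 := by
  have h0 : t ^ m ≠ 0 := pow_ne_zero _ ht
  induction k using Int.induction_on with
  | zero => simp
  | succ i ih =>
    have e : ((uK t : (At t)ˣ) : At t) = aK t := rfl
    rw [zpow_add, zpow_one, Units.val_mul, e, map_mul, hρ.2.2.1, ← Matrix.mulVec_mulVec, K_ev,
      Matrix.mulVec_smul, ih, smul_smul, zpow_add₀ h0, zpow_one, mul_comm]
  | pred i ih =>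
    have e : (((uK t)⁻¹ : (At t)ˣ) : At t) = aK' t := rfl
    rw [zpow_sub, zpow_one, Units.val_mul, e, map_mul, hρ.2.2.2, ← Matrix.mulVec_mulVec, K'_ev,
      Matrix.mulVec_smul, ih, smul_smul, zpow_sub₀ h0, zpow_one, mul_comm, div_eq_mul_inv]

lemma mon_zero (m : ℕ) (ρ : At t →ₐ[ℂ] Matrix (Fin (m + 1)) (Fin (m + 1)) ℂ)
    (hρ : IsRho t m ρ) (x : ℕ × ℤ × ℕ) (j : ℕ) (hj : j ≤ m) (h : j < x.2.2) :
    (ρ (mon t x)).mulVec (ev m j) = 0 := by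
  rw [mon, map_mul, map_pow, hρ.1, ← Matrix.mulVec_mulVec, Xpow_zero m _ j hj h,
    Matrix.mulVec_zero]

lemma mon_self (ht : t ≠ 0) (m : ℕ) (ρ : At t →ₐ[ℂ] Matrix (Fin (m + 1)) (Fin (m + 1)) ℂ)
    (hρ : IsRho t m ρ) (a : ℕ) (k : ℤ) (b : ℕ) (hj : b ≤ m) :
    (ρ (mon t (a, k, b))).mulVec (ev m b) =
      ((∏ i ∈ Finset.range b, qint t ((i : ℤ) + 1)) * ((t ^ m) ^ k *
        (∏ i ∈ Finset.range a, qint t ((m : ℤ) - i)))) • ev m a := by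
  simp only [mon]
  rw [map_mul, map_mul, map_pow, map_pow, hρ.1, hρ.2.1, ← Matrix.mulVec_mulVec, Xpow_self m _ hj,
    Matrix.mulVec_smul, ← Matrix.mulVec_mulVec, Kpow_ev ht m ρ hρ, Matrix.mulVec_smul, Ypow_ev,
    smul_smul, smul_smul, mul_assoc]

lemma char_indep (ht : t ≠ 0) (hroot : ∀ k : ℕ, 0 < k → t ^ k ≠ 1) (S : Finset ℤ) (g : ℤ → ℂ)
    (M : ℕ) (h : ∀ m ≥ M, ∑ k ∈ S, g k * (t ^ m) ^ k = 0) : ∀ k ∈ S, g k = 0 := by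
  have li := linearIndependent_monoidHom (Multiplicative ℕ) ℂ
  have inj : Function.Injective (fun k : ℤ => powersHom ℂ (t ^ k)) := by
    intro k l hkl
    exact zpow_inj_t ht hroot ((powersHom ℂ).injective hkl)
  have li2 := li.comp _ inj
  rw [linearIndependent_iff'] at li2
  intro k hk
  have := li2 S (fun k => g k * (t ^ M) ^ k) (by
    ext n
    have := h (M + n.toAdd) (by omega)
    simp only [Finset.sum_apply, Pi.smul_apply, Function.comp, smul_eq_mul, powersHom_apply,
      Pi.zero_apply]
    rw [← this]
    refine Finset.sum_congr rfl fun k _ => ?_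
    rw [pow_add, mul_zpow, mul_assoc, ← zpow_natCast (t ^ k), ← zpow_mul, mul_comm k, zpow_mul,
      zpow_natCast]) k hk
  exact (mul_eq_zero.1 this).resolve_right (zpow_ne_zero _ (pow_ne_zero _ ht))

lemma coeff_zero (ht : t ≠ 0) (hroot : ∀ k : ℕ, 0 < k → t ^ k ≠ 1)
    (ρ : ∀ m : ℕ, At t →ₐ[ℂ] Matrix (Fin (m + 1)) (Fin (m + 1)) ℂ)
    (hρ : ∀ m, IsRho t m (ρ m)) (A : Finset ℕ) (S : Finset ℤ) (B : Finset ℕ)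
    (f : ℕ → ℤ → ℕ → ℂ)
    (hz : ∀ m, ρ m (∑ a ∈ A, ∑ k ∈ S, ∑ b ∈ B, f a k b • mon t (a, k, b)) = 0) (b : ℕ) :
    b ∈ B → ∀ a ∈ A, ∀ k ∈ S, f a k b = 0 := by
  induction b using Nat.strong_induction_on with
  | _ b ih =>
  intro hb a ha
  refine char_indep ht hroot S (fun k => f a k b) (max a b) fun m hm => ?_
  have ham : a ≤ m := le_trans (le_max_left _ _) hm
  have hbm : b ≤ m := le_trans (le_max_right _ _) hm
  have h := congrArg (fun N => N.mulVec (ev m b) ⟨a, by omega⟩) (hz m)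
  simp only [map_sum, map_smul, Matrix.sum_mulVec, Finset.sum_apply, Matrix.smul_mulVec,
    Matrix.zero_mulVec, Pi.zero_apply, Pi.smul_apply] at h
  have h3 : ∀ a' ∈ A, ∀ k ∈ S, ∑ b' ∈ B, f a' k b' •
      ((ρ m (mon t (a', k, b'))).mulVec (ev m b) ⟨a, by omega⟩ : ℂ) =
      f a' k b • ((ρ m (mon t (a', k, b))).mulVec (ev m b) ⟨a, by omega⟩ : ℂ) := by
    intro a' ha' k hk
    refine Finset.sum_eq_single b (fun b' hb' hne => ?_) (fun hn => absurd hb hn)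
    rcases lt_or_gt_of_ne hne with hlt | hlt
    · rw [ih b' hlt hb' a' ha' k hk, zero_smul]
    · rw [mon_zero m (ρ m) (hρ m) _ b hbm hlt]; simp
  rw [Finset.sum_congr rfl fun a' ha' => Finset.sum_congr rfl fun k hk => h3 a' ha' k hk] at h
  rw [Finset.sum_eq_single a] at h
  · have hne : (∏ i ∈ Finset.range b, qint t ((i : ℤ) + 1)) *
        (∏ i ∈ Finset.range a, qint t ((m : ℤ) - i)) ≠ 0 := by
      refine mul_ne_zero (Finset.prod_ne_zero_iff.2 fun i hi => qint_ne ht hroot _ (by omega))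
        (Finset.prod_ne_zero_iff.2 fun i hi => qint_ne ht hroot _ ?_)
      have := Finset.mem_range.1 hi
      omega
    refine (mul_eq_zero.1 (?_ : ((∏ i ∈ Finset.range b, qint t ((i : ℤ) + 1)) *
        (∏ i ∈ Finset.range a, qint t ((m : ℤ) - i))) * _ = 0)).resolve_left hne
    rw [Finset.mul_sum, ← h]
    refine Finset.sum_congr rfl fun k hk => ?_
    rw [mon_self ht m (ρ m) (hρ m) a k b hbm]
    simp [ev]
    ring
  · intro a' ha' hne
    refine Finset.sum_eq_zero fun k hk => ?_
    rw [mon_self ht m (ρ m) (hρ m) a' k b hbm]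
    simp [ev, hne.symm]
  · exact fun hn => absurd ha hn

end Helpers

/-- The homomorphism `Θ : Aₜ → ∏_{m≥0} M_{m+1}(ℂ)`,
`Θ(Z) = (ρ_0(Z), ρ_1(Z), …)`, is injective. -/
theorem stmt3 (t : ℂ) (ht : t ≠ 0) (hroot : ∀ k : ℕ, 0 < k → t ^ k ≠ 1)
    (ρ : ∀ m : ℕ, At t →ₐ[ℂ] Matrix (Fin (m + 1)) (Fin (m + 1)) ℂ)
    (hρ : ∀ m, IsRho t m (ρ m)) :
    Function.Injective (fun Z : At t => (fun m : ℕ => ρ m Z :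
      ∀ m : ℕ, Matrix (Fin (m + 1)) (Fin (m + 1)) ℂ)) := by
  have key : ∀ Z : At t, (∀ m, ρ m Z = 0) → Z = 0 := by
    intro Z hZ
    obtain ⟨f, rfl⟩ := (Finsupp.mem_span_range_iff_exists_finsupp).1 (SS_top ht Z)
    let A := f.support.image (fun x => x.1)
    let S := f.support.image (fun x => x.2.1)
    let B := f.support.image (fun x => x.2.2)
    have hs : (f.sum fun i c => c • mon t i) =
        ∑ a ∈ A, ∑ k ∈ S, ∑ b ∈ B, f (a, k, b) • mon t (a, k, b) := by
      rw [Finsupp.sum_of_support_subset f (s := A ×ˢ S ×ˢ B) _ _ (by simp)]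
      · rw [Finset.sum_product]
        refine Finset.sum_congr rfl fun a _ => ?_
        rw [Finset.sum_product]
      · intro x hx
        simp only [Finset.mem_product]
        exact ⟨Finset.mem_image_of_mem _ hx, Finset.mem_image_of_mem (fun x => x.2.1) hx,
          Finset.mem_image_of_mem (fun x => x.2.2) hx⟩
    rw [hs] at hZ ⊢
    have h0 := coeff_zero ht hroot ρ hρ A S B (fun a k b => f (a, k, b)) hZ
    refine Finset.sum_eq_zero fun a ha => Finset.sum_eq_zero fun k hk =>
      Finset.sum_eq_zero fun b hb => ?_
    have := h0 b hb a ha k hk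
    rw [this, zero_smul]
  intro Z W h
  refine sub_eq_zero.1 (key _ fun m => ?_)
  rw [map_sub, sub_eq_zero]
  exact congrFun h m

end
end

section
/- For n ≥ 1, the operators E_1, …, E_{n−1} on (ℂ²)^{⊗n} satisfy the Temperley–Lieb relations: E_i² = −(t² + t⁻²) E_i for all i; E_i E_{i±1} E_i = E_i whenever both indices lie in {1, …, n−1}; and E_i E_j = E_j E_i whenever |i − j| ≥ 2. -/
open scoped TensorProduct
open Complex

noncomputable section

/-- The `n`-fold tensor power `1̲^{⊗n} = (ℂ²)^{⊗n}`, realized concretely as the space of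
ℂ-valued functions on the set of multi-indices `(Fin 2)ⁿ` (the basis vector
`e_{s 0} ⊗ ⋯ ⊗ e_{s (n−1)}` corresponds to the delta function at `s`). -/
abbrev Vn (n : ℕ) : Type := (Fin n → Fin 2) → ℂ

/-- Pointwise multiplication by a fixed function, as a linear endomorphism. -/
def ptwiseMul {α : Type} (c : α → ℂ) : (α → ℂ) →ₗ[ℂ] (α → ℂ) where
  toFun f := fun u => c u * f u
  map_add' f g := by funext u; simp [mul_add]
  map_smul' r f := by funext u; simp [smul_eq_mul]; ring

/-- The coefficients of `μ`: `μ(e_a ⊗ e_b) = muC a b`, i.e. `μ(e_{1/2}⊗e_{−1/2}) = it`,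
`μ(e_{−1/2}⊗e_{1/2}) = −it⁻¹`, `0` otherwise (recall `e_{1/2} = e₀`, `e_{−1/2} = e₁`). -/
def muC (t : ℂ) : Fin 2 → Fin 2 → ℂ :=
  ![![0, Complex.I * t], ![-(Complex.I * t⁻¹), 0]]

/-- The coefficients of `η`: `η(1) = ∑_{a,b} etaC a b • e_a ⊗ e_b`, i.e.
`η(1) = it·e_{1/2}⊗e_{−1/2} − it⁻¹·e_{−1/2}⊗e_{1/2}`. -/
def etaC (t : ℂ) : Fin 2 → Fin 2 → ℂ :=
  ![![0, Complex.I * t], ![-(Complex.I * t⁻¹), 0]]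

/-- The Temperley–Lieb generator `E = id^{⊗i} ⊗ (η∘μ) ⊗ id^{⊗(n−i−2)}` acting on
`1̲^{⊗n}`, where `η∘μ` acts on the tensor factors in positions `i` and `i+1`
(`0`-indexed; this is `E_{i+1}` in the `1`-indexed labelling). On basis vectors,
`E (e_{s}) = μ(e_{s i} ⊗ e_{s (i+1)}) · ∑_{a b} etaC a b • e_{s[i:=a][i+1:=b]}`,
which in function coordinates is the formula below. -/
def TLE (t : ℂ) (n i : ℕ) (h : i + 1 < n) : Module.End ℂ (Vn n) :=
  (ptwiseMul fun u => etaC t (u ⟨i, Nat.lt_of_succ_lt h⟩) (u ⟨i + 1, h⟩)) ∘ₗ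
    ∑ a : Fin 2, ∑ b : Fin 2, muC t a b •
      LinearMap.funLeft ℂ ℂ (fun u =>
        Function.update (Function.update u (⟨i, Nat.lt_of_succ_lt h⟩ : Fin n) a)
          (⟨i + 1, h⟩ : Fin n) b)

theorem TLE_apply (t : ℂ) (n i : ℕ) (h : i + 1 < n) (f : Vn n) (u : Fin n → Fin 2) :
    TLE t n i h f u = etaC t (u ⟨i, Nat.lt_of_succ_lt h⟩) (u ⟨i + 1, h⟩) *
      (Complex.I * t * f (Function.update (Function.update u (⟨i, Nat.lt_of_succ_lt h⟩ : Fin n) 0)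
          (⟨i + 1, h⟩ : Fin n) 1)
       - Complex.I * t⁻¹ * f (Function.update (Function.update u (⟨i, Nat.lt_of_succ_lt h⟩ : Fin n) 1)
          (⟨i + 1, h⟩ : Fin n) 0)) := by
  simp [TLE, ptwiseMul, muC, Fin.sum_univ_two, LinearMap.funLeft_apply, sub_eq_add_neg]

theorem upd_eq {n : ℕ} (u : Fin n → Fin 2) (i : Fin n) (a : Fin 2) (h : u i = a) :
    Function.update u i a = u := by
  subst h; simp

theorem stmt9 (t : ℂ) (ht : t ≠ 0) (hroot : ∀ k : ℕ, 0 < k → t ^ k ≠ 1) (n : ℕ)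
    (hn : 1 ≤ n) :
    -- E_i² = −(t² + t⁻²) E_i
    (∀ (i : ℕ) (h : i + 1 < n),
      TLE t n i h * TLE t n i h = (-(t ^ 2 + t⁻¹ ^ 2)) • TLE t n i h) ∧
    -- E_i E_{i+1} E_i = E_i
    (∀ (i : ℕ) (h : i + 2 < n),
      TLE t n i (by omega) * TLE t n (i + 1) h * TLE t n i (by omega)
        = TLE t n i (by omega)) ∧
    -- E_{i+1} E_i E_{i+1} = E_{i+1}
    (∀ (i : ℕ) (h : i + 2 < n),
      TLE t n (i + 1) h * TLE t n i (by omega) * TLE t n (i + 1) h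
        = TLE t n (i + 1) h) ∧
    -- E_i E_j = E_j E_i for |i − j| ≥ 2
    (∀ (i j : ℕ) (hi : i + 1 < n) (hj : j + 1 < n), i + 2 ≤ j ∨ j + 2 ≤ i →
      TLE t n i hi * TLE t n j hj = TLE t n j hj * TLE t n i hi) := by
  have e00 : etaC t 0 0 = 0 := by simp [etaC]
  have e01 : etaC t 0 1 = Complex.I * t := by simp [etaC]
  have e10 : etaC t 1 0 = -(Complex.I * t⁻¹) := by simp [etaC]
  have e11 : etaC t 1 1 = 0 := by simp [etaC]
  have I2 : Complex.I ^ 2 = -1 := Complex.I_sq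
  have I4 : Complex.I ^ 4 = 1 := Complex.I_pow_four
  have I3 : Complex.I ^ 3 = -Complex.I := Complex.I_pow_three
  have I5 : Complex.I ^ 5 = Complex.I := by rw [pow_succ, I4, one_mul]
  have I6 : Complex.I ^ 6 = -1 := by rw [pow_succ, I5, ← sq, I2]
  have htt : t * t⁻¹ = 1 := mul_inv_cancel₀ ht
  refine ⟨?_, ?_, ?_, ?_⟩
  · intro i h
    refine LinearMap.ext fun f => ?_; funext u
    simp only [Module.End.mul_apply, TLE_apply, LinearMap.smul_apply, Pi.smul_apply, smul_eq_mul]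
    simp [Function.update_apply, e01, e10]
    have A : ∀ a b c d : Fin 2, Function.update (Function.update (Function.update (Function.update u ⟨i, Nat.lt_of_succ_lt h⟩ a) ⟨i+1, h⟩ b) ⟨i, Nat.lt_of_succ_lt h⟩ c) ⟨i+1, h⟩ d = Function.update (Function.update u ⟨i, Nat.lt_of_succ_lt h⟩ c) ⟨i+1, h⟩ d := by
      intro a b c d
      funext k
      simp only [Function.update_apply]
      split_ifs <;> rfl
    simp only [A]
    linear_combination (etaC t (u ⟨i, Nat.lt_of_succ_lt h⟩) (u ⟨i + 1, h⟩) * ((Complex.I * t * f (Function.update (Function.update u (⟨i, Nat.lt_of_succ_lt h⟩ : Fin n) 0)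
          (⟨i + 1, h⟩ : Fin n) 1)
       - Complex.I * t⁻¹ * f (Function.update (Function.update u (⟨i, Nat.lt_of_succ_lt h⟩ : Fin n) 1)
          (⟨i + 1, h⟩ : Fin n) 0)))) * (t^2 + t⁻¹^2) * I2
  · intro i h
    refine LinearMap.ext fun f => ?_; funext u
    simp only [Module.End.mul_apply, TLE_apply]
    have h0 : i < n := by omega
    have h1 : i + 1 < n := by omega
    generalize hp : (⟨i, h0⟩ : Fin n) = p
    generalize hq : (⟨i+1, h1⟩ : Fin n) = q
    generalize hr : (⟨i+1+1, h⟩ : Fin n) = r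
    have pq : p ≠ q := by subst hp hq; simp
    have pr : p ≠ r := by subst hp hr; simp; omega
    have qr : q ≠ r := by subst hq hr; simp
    have A : ∀ a c d x y : Fin 2, u r = d → Function.update (Function.update (Function.update (Function.update (Function.update u p a) q c) r d) p x) q y = Function.update (Function.update u p x) q y := by
      intro _ _ _ _ _ hd
      funext k
      simp only [Function.update_apply]
      split_ifs <;> simp_all
    have hur : u r = 0 ∨ u r = 1 := by generalize u r = z; revert z; decide
    rcases hur with hur | hur <;>
    · simp [Function.update_apply, e01, e10, e00, e11, pq, pr, qr, pq.symm, pr.symm, qr.symm, hur]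
      simp [A, hur]
      field_simp
      ring_nf
      simp [I2, I3, I4, I5, I6]
      try ring_nf
  · intro i h
    refine LinearMap.ext fun f => ?_; funext u
    simp only [Module.End.mul_apply, TLE_apply]
    have h0 : i < n := by omega
    have h1 : i + 1 < n := by omega
    generalize hp : (⟨i, h0⟩ : Fin n) = p
    generalize hq : (⟨i+1, h1⟩ : Fin n) = q
    generalize hr : (⟨i+1+1, h⟩ : Fin n) = r
    have pq : p ≠ q := by subst hp hq; simp
    have pr : p ≠ r := by subst hp hr; simp; omega
    have qr : q ≠ r := by subst hq hr; simp
    have A : ∀ a b c x y : Fin 2, u p = c → Function.update (Function.update (Function.update (Function.update (Function.update u q a) r b) p c) q x) r y = Function.update (Function.update u q x) r y := by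
      intro _ _ _ _ _ hd
      funext k
      simp only [Function.update_apply]
      split_ifs <;> simp_all
    have hur : u p = 0 ∨ u p = 1 := by generalize u p = z; revert z; decide
    rcases hur with hur | hur <;>
    · simp [Function.update_apply, e01, e10, e00, e11, pq, pr, qr, pq.symm, pr.symm, qr.symm, hur]
      simp [A, hur]
      field_simp
      ring_nf
      simp [I2, I3, I4, I5, I6]
      try ring_nf
  · intro i j hi hj hij
    refine LinearMap.ext fun f => ?_; funext u
    simp only [Module.End.mul_apply, TLE_apply]
    have h0 : i < n := by omega
    have h1 : j < n := by omega
    generalize hp : (⟨i, h0⟩ : Fin n) = p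
    generalize hq : (⟨i+1, hi⟩ : Fin n) = q
    generalize hr : (⟨j, h1⟩ : Fin n) = r
    generalize hs : (⟨j+1, hj⟩ : Fin n) = s
    have pr : p ≠ r := by subst hp hr; simp; omega
    have ps : p ≠ s := by subst hp hs; simp; omega
    have qr : q ≠ r := by subst hq hr; simp; omega
    have qs : q ≠ s := by subst hq hs; simp; omega
    have A : ∀ a b c d : Fin 2, Function.update (Function.update (Function.update (Function.update u p a) q b) r c) s d = Function.update (Function.update (Function.update (Function.update u r c) s d) p a) q b := by
      intro a b c d
      funext k
      simp only [Function.update_apply]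
      split_ifs <;> simp_all
    simp only [A]
    simp only [Function.update_apply, pr, ps, qr, qs, pr.symm, ps.symm, qr.symm, qs.symm, if_false]
    ring

end
end

section
/- For every n ≥ 1, the unital subalgebra of End_ℂ((ℂ²)^{⊗n}) generated by E_1, …, E_{n−1} is exactly End_{A_t}((ℂ²)^{⊗n}), the commutant of the A_t-action on 1̲^{⊗n}, and this algebra has ℂ-dimension equal to the Catalan number C_n = (1/(n+1))·binom(2n, n). -/
open scoped TensorProduct
open Complex

noncomputable section

/-- Diagonal entries of `ρ₁(K) = diag(t, t⁻¹)` on the basis `e₀ = e_{1/2}`, `e₁ = e_{−1/2}`. -/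
def kD (t : ℂ) : Fin 2 → ℂ := ![t, t⁻¹]
/-- Diagonal entries of `ρ₁(K⁻¹) = diag(t⁻¹, t)`. -/
def kD' (t : ℂ) : Fin 2 → ℂ := ![t⁻¹, t]

/-- Action of `K` on `1̲^{⊗n}` (via the iterated coproduct `Δ^{(n−1)}K = K^{⊗n}`). -/
def piK (t : ℂ) (n : ℕ) : Module.End ℂ (Vn n) :=
  ptwiseMul fun u => ∏ k : Fin n, kD t (u k)

/-- Action of `K⁻¹` on `1̲^{⊗n}`. -/
def piK' (t : ℂ) (n : ℕ) : Module.End ℂ (Vn n) :=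
  ptwiseMul fun u => ∏ k : Fin n, kD' t (u k)

/-- Action of `X` on `1̲^{⊗n}` (via `Δ^{(n−1)}X = ∑_i (K⁻¹)^{⊗i} ⊗ X ⊗ K^{⊗(n−1−i)}`;
recall `ρ₁(X)e₁ = e₀`, `ρ₁(X)e₀ = 0`). -/
def piX (t : ℂ) (n : ℕ) : Module.End ℂ (Vn n) :=
  ∑ i : Fin n,
    (ptwiseMul fun u => (if u i = 0 then 1 else 0) *
        (∏ k ∈ Finset.univ.filter (fun k => k < i), kD' t (u k)) *
        (∏ k ∈ Finset.univ.filter (fun k => i < k), kD t (u k))) ∘ₗ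
      LinearMap.funLeft ℂ ℂ (fun u => Function.update u i 1)

/-- Action of `Y` on `1̲^{⊗n}` (via `Δ^{(n−1)}Y = ∑_i (K⁻¹)^{⊗i} ⊗ Y ⊗ K^{⊗(n−1−i)}`;
recall `ρ₁(Y)e₀ = e₁`, `ρ₁(Y)e₁ = 0`). -/
def piY (t : ℂ) (n : ℕ) : Module.End ℂ (Vn n) :=
  ∑ i : Fin n,
    (ptwiseMul fun u => (if u i = 1 then 1 else 0) *
        (∏ k ∈ Finset.univ.filter (fun k => k < i), kD' t (u k)) *
        (∏ k ∈ Finset.univ.filter (fun k => i < k), kD t (u k))) ∘ₗ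
      LinearMap.funLeft ℂ ℂ (fun u => Function.update u i 0)

/-- `π` is the representation of `Aₜ` on the `n`-fold tensor power `1̲^{⊗n}` obtained
from `ρ₁` via the iterated comultiplication. -/
def IsPi (t : ℂ) (n : ℕ) (π : At t →ₐ[ℂ] Module.End ℂ (Vn n)) : Prop :=
  π (aX t) = piX t n ∧ π (aY t) = piY t n ∧ π (aK t) = piK t n ∧ π (aK' t) = piK' t n

/-! ### Slices -/

namespace TL

set_option linter.all false
set_option linter.unnecessarySeqFocus false
set_option linter.unusedSectionVars false

/-- Slice of a function along the last coordinate. -/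
def sl {n : ℕ} (a : Fin 2) : Vn (n + 1) →ₗ[ℂ] Vn n :=
  LinearMap.funLeft ℂ ℂ (fun u : Fin n → Fin 2 => (Fin.snoc u a : Fin (n + 1) → Fin 2))

theorem sl_apply {n : ℕ} (a : Fin 2) (F : Vn (n + 1)) (u : Fin n → Fin 2) :
    sl a F u = F (Fin.snoc u a) := rfl

theorem sl_ext {n : ℕ} {F G : Vn (n + 1)} (h0 : sl 0 F = sl 0 G) (h1 : sl 1 F = sl 1 G) :
    F = G := by
  funext u
  rw [← Fin.snoc_init_self u]
  have h : ∀ a, sl a F = sl a G := by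
    intro a; fin_cases a
    · exact h0
    · exact h1
  exact congrFun (h (u (Fin.last n))) (Fin.init u)

/-- Building a function from its two slices. -/
def mk {n : ℕ} : (Vn n × Vn n) →ₗ[ℂ] Vn (n + 1) where
  toFun p := fun u => if u (Fin.last n) = 0 then p.1 (Fin.init u) else p.2 (Fin.init u)
  map_add' p q := by funext u; simp only [Prod.fst_add, Prod.snd_add, Pi.add_apply]; split_ifs <;> rfl
  map_smul' r p := by
    funext u; simp only [Prod.smul_fst, Prod.smul_snd, Pi.smul_apply, RingHom.id_apply]
    split_ifs <;> rfl

@[simp] theorem sl0_mk {n : ℕ} (p : Vn n × Vn n) : sl 0 (mk p) = p.1 := by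
  funext u; simp [sl_apply, mk]

@[simp] theorem sl1_mk {n : ℕ} (p : Vn n × Vn n) : sl 1 (mk p) = p.2 := by
  funext u; simp [sl_apply, mk]

theorem mk_sl {n : ℕ} (F : Vn (n + 1)) : mk (sl 0 F, sl 1 F) = F := by
  apply sl_ext <;> simp

theorem ptwiseMul_apply {α : Type} (c f : α → ℂ) (u : α) : ptwiseMul c f u = c u * f u := rfl

theorem sl_piK (t : ℂ) {n : ℕ} (a : Fin 2) (F : Vn (n + 1)) :
    sl a (piK t (n + 1) F) = kD t a • piK t n (sl a F) := by
  funext u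
  simp [sl_apply, piK, ptwiseMul_apply, Fin.prod_univ_castSucc]; ring

theorem sl_piK' (t : ℂ) {n : ℕ} (a : Fin 2) (F : Vn (n + 1)) :
    sl a (piK' t (n + 1) F) = kD' t a • piK' t n (sl a F) := by
  funext u
  simp [sl_apply, piK', ptwiseMul_apply, Fin.prod_univ_castSucc]; ring

theorem sl_piX (t : ℂ) {n : ℕ} (a : Fin 2) (F : Vn (n + 1)) :
    sl a (piX t (n + 1) F) = kD t a • piX t n (sl a F)
      + (if a = 0 then (1 : ℂ) else 0) • piK' t n (sl 1 F) := by
  funext u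
  simp only [sl_apply, piX, ptwiseMul_apply, Fin.sum_univ_castSucc, LinearMap.add_apply,
    LinearMap.sum_apply, LinearMap.comp_apply, Pi.add_apply, Finset.sum_apply, Pi.smul_apply,
    LinearMap.funLeft_apply, Finset.prod_filter, Fin.prod_univ_castSucc, Fin.snoc_castSucc,
    Fin.snoc_last, piK', smul_eq_mul, Fin.castSucc_lt_castSucc_iff, Fin.castSucc_lt_last,
    if_true, ← Fin.snoc_update, Fin.update_snoc_last, lt_irrefl, if_false,
    (Fin.castSucc_lt_last _).not_gt, Finset.mul_sum, Finset.prod_const_one, mul_one]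
  congr 1
  · refine Finset.sum_congr rfl fun i _ => ?_
    ring
  · ring

theorem sl_piY (t : ℂ) {n : ℕ} (a : Fin 2) (F : Vn (n + 1)) :
    sl a (piY t (n + 1) F) = kD t a • piY t n (sl a F)
      + (if a = 1 then (1 : ℂ) else 0) • piK' t n (sl 0 F) := by
  funext u
  simp only [sl_apply, piY, ptwiseMul_apply, Fin.sum_univ_castSucc, LinearMap.add_apply,
    LinearMap.sum_apply, LinearMap.comp_apply, Pi.add_apply, Finset.sum_apply, Pi.smul_apply,
    LinearMap.funLeft_apply, Finset.prod_filter, Fin.prod_univ_castSucc, Fin.snoc_castSucc,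
    Fin.snoc_last, piK', smul_eq_mul, Fin.castSucc_lt_castSucc_iff, Fin.castSucc_lt_last,
    if_true, ← Fin.snoc_update, Fin.update_snoc_last, lt_irrefl, if_false,
    (Fin.castSucc_lt_last _).not_gt, Finset.mul_sum, Finset.prod_const_one, mul_one]
  congr 1
  · refine Finset.sum_congr rfl fun i _ => ?_
    ring
  · ring

@[simp] theorem kD0 (t : ℂ) : kD t 0 = t := rfl
@[simp] theorem kD1 (t : ℂ) : kD t 1 = t⁻¹ := rfl
@[simp] theorem kD'0 (t : ℂ) : kD' t 0 = t⁻¹ := rfl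
@[simp] theorem kD'1 (t : ℂ) : kD' t 1 = t := rfl

theorem sl0X (t : ℂ) {n : ℕ} (F : Vn (n + 1)) :
    sl 0 (piX t (n + 1) F) = t • piX t n (sl 0 F) + piK' t n (sl 1 F) := by simp [sl_piX]
theorem sl1X (t : ℂ) {n : ℕ} (F : Vn (n + 1)) :
    sl 1 (piX t (n + 1) F) = t⁻¹ • piX t n (sl 1 F) := by simp [sl_piX]
theorem sl0Y (t : ℂ) {n : ℕ} (F : Vn (n + 1)) :
    sl 0 (piY t (n + 1) F) = t • piY t n (sl 0 F) := by simp [sl_piY]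
theorem sl1Y (t : ℂ) {n : ℕ} (F : Vn (n + 1)) :
    sl 1 (piY t (n + 1) F) = t⁻¹ • piY t n (sl 1 F) + piK' t n (sl 0 F) := by simp [sl_piY]
theorem sl0K (t : ℂ) {n : ℕ} (F : Vn (n + 1)) :
    sl 0 (piK t (n + 1) F) = t • piK t n (sl 0 F) := by simp [sl_piK]
theorem sl1K (t : ℂ) {n : ℕ} (F : Vn (n + 1)) :
    sl 1 (piK t (n + 1) F) = t⁻¹ • piK t n (sl 1 F) := by simp [sl_piK]
theorem sl0K' (t : ℂ) {n : ℕ} (F : Vn (n + 1)) :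
    sl 0 (piK' t (n + 1) F) = t⁻¹ • piK' t n (sl 0 F) := by simp [sl_piK']
theorem sl1K' (t : ℂ) {n : ℕ} (F : Vn (n + 1)) :
    sl 1 (piK' t (n + 1) F) = t • piK' t n (sl 1 F) := by simp [sl_piK']

/-! ### Extension by identity, cups and caps -/

/-- `f ⊗ id`. -/
def ext {m k : ℕ} (f : Vn m →ₗ[ℂ] Vn k) : Vn (m + 1) →ₗ[ℂ] Vn (k + 1) :=
  mk ∘ₗ (LinearMap.prod (f ∘ₗ sl 0) (f ∘ₗ sl 1))

@[simp] theorem sl0_ext {m k : ℕ} (f : Vn m →ₗ[ℂ] Vn k) (F : Vn (m + 1)) :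
    sl 0 (ext f F) = f (sl 0 F) := by simp [ext]
@[simp] theorem sl1_ext {m k : ℕ} (f : Vn m →ₗ[ℂ] Vn k) (F : Vn (m + 1)) :
    sl 1 (ext f F) = f (sl 1 F) := by simp [ext]

/-- The algebra homomorphism `f ↦ f ⊗ id`. -/
def extA (n : ℕ) : Module.End ℂ (Vn n) →ₐ[ℂ] Module.End ℂ (Vn (n + 1)) :=
  AlgHom.ofLinearMap
    { toFun := fun f => ext f
      map_add' := fun f g => by refine LinearMap.ext fun F => ?_; apply sl_ext <;> simp
      map_smul' := fun f g => by refine LinearMap.ext fun F => ?_; apply sl_ext <;> simp }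
    (by refine LinearMap.ext fun F => ?_; apply sl_ext <;> simp)
    (fun f g => by refine LinearMap.ext fun F => ?_; apply sl_ext <;> simp)

theorem extA_apply {n : ℕ} (f : Module.End ℂ (Vn n)) : extA n f = ext f := rfl

/-- The cup `id ⊗ η`. -/
def cup (t : ℂ) (m : ℕ) : Vn m →ₗ[ℂ] Vn (m + 2) :=
  mk ∘ₗ LinearMap.prod (mk ∘ₗ LinearMap.prod 0 ((-(I * t⁻¹)) • LinearMap.id))
    (mk ∘ₗ LinearMap.prod ((I * t) • LinearMap.id) 0)

/-- The cap `id ⊗ μ`. -/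
def cap (t : ℂ) (m : ℕ) : Vn (m + 2) →ₗ[ℂ] Vn m :=
  (I * t) • (sl 0 ∘ₗ sl 1) - (I * t⁻¹) • (sl 1 ∘ₗ sl 0)

theorem sl0_cup (t : ℂ) {m : ℕ} (F : Vn m) :
    sl 0 (cup t m F) = mk (0, -(I * t⁻¹) • F) := by simp [cup]
theorem sl1_cup (t : ℂ) {m : ℕ} (F : Vn m) :
    sl 1 (cup t m F) = mk ((I * t) • F, 0) := by simp [cup]
theorem cap_apply (t : ℂ) {m : ℕ} (F : Vn (m + 2)) :
    cap t m F = (I * t) • sl 0 (sl 1 F) - (I * t⁻¹) • sl 1 (sl 0 F) := rfl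

theorem TLE_top (t : ℂ) (m : ℕ) (h : m + 1 < m + 2) : TLE t (m + 2) m h = cup t m ∘ₗ cap t m := by
  have h1 : (⟨m + 1, h⟩ : Fin (m + 2)) = Fin.last (m + 1) := rfl
  have h2 : (⟨m, Nat.lt_of_succ_lt h⟩ : Fin (m + 2)) = Fin.castSucc (Fin.last m) := rfl
  refine LinearMap.ext fun F => ?_
  have key : ∀ x y : Fin 2, sl x (sl y (TLE t (m + 2) m h F)) = etaC t x y • cap t m F := by
    intro x y
    funext u
    simp only [sl_apply, TLE, h1, h2, LinearMap.comp_apply, ptwiseMul_apply, Fin.snoc_last,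
      Fin.snoc_castSucc, Pi.smul_apply, smul_eq_mul, cap_apply]
    congr 1
    simp [Fin.sum_univ_two, muC, ← Fin.snoc_update, Fin.update_snoc_last, sl_apply,
      LinearMap.funLeft_apply, sub_eq_add_neg]
  apply sl_ext <;> apply sl_ext <;> simp [key, sl0_cup, sl1_cup, etaC]

theorem TLE_ext (t : ℂ) (n i : ℕ) (h : i + 1 < n) (h' : i + 1 < n + 1) :
    TLE t (n + 1) i h' = ext (TLE t n i h) := by
  have h1 : (⟨i + 1, h'⟩ : Fin (n + 1)) = Fin.castSucc ⟨i + 1, h⟩ := rfl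
  have h2 : (⟨i, Nat.lt_of_succ_lt h'⟩ : Fin (n + 1)) = Fin.castSucc ⟨i, Nat.lt_of_succ_lt h⟩ := rfl
  have key : ∀ (a : Fin 2) (F), sl a (TLE t (n + 1) i h' F) = TLE t n i h (sl a F) := by
    intro a F
    funext u
    simp only [sl_apply, TLE, h1, h2, LinearMap.comp_apply, ptwiseMul_apply,
      Fin.snoc_castSucc]
    congr 1
    simp only [Fin.sum_univ_two, ← Fin.snoc_update, LinearMap.funLeft_apply, LinearMap.add_apply,
      LinearMap.smul_apply, Pi.add_apply, Pi.smul_apply, sl_apply]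
  refine LinearMap.ext fun F => ?_
  apply sl_ext <;> simp [key]

/-! ### The relations -/

theorem piX_zero (t : ℂ) (F : Vn 0) : piX t 0 F = 0 := by simp [piX]
theorem piY_zero (t : ℂ) (F : Vn 0) : piY t 0 F = 0 := by simp [piY]
theorem piK_zero (t : ℂ) (F : Vn 0) : piK t 0 F = F := by
  funext u; simp [piK, ptwiseMul_apply]
theorem piK'_zero (t : ℂ) (F : Vn 0) : piK' t 0 F = F := by
  funext u; simp [piK', ptwiseMul_apply]

section rels
variable {t : ℂ} (ht : t ≠ 0)
include ht

theorem rKK' : ∀ {n : ℕ} (F : Vn n), piK t n (piK' t n F) = F := by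
  intro n
  induction n with
  | zero => intro F; simp [piK_zero, piK'_zero]
  | succ n ih =>
    intro F
    apply sl_ext <;> simp [sl0K, sl1K, sl0K', sl1K', ih, smul_smul, ht]

theorem rK'K : ∀ {n : ℕ} (F : Vn n), piK' t n (piK t n F) = F := by
  intro n
  induction n with
  | zero => intro F; simp [piK_zero, piK'_zero]
  | succ n ih =>
    intro F
    apply sl_ext <;> simp [sl0K, sl1K, sl0K', sl1K', ih, smul_smul, ht]

theorem rKX : ∀ {n : ℕ} (F : Vn n), piK t n (piX t n F) = t ^ 2 • piX t n (piK t n F) := by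
  intro n
  induction n with
  | zero => intro F; simp [piX_zero, piK_zero]
  | succ n ih =>
    intro F
    apply sl_ext <;> simp only [sl0K, sl1K, sl0X, sl1X, ih, map_add, map_smul, rKK' ht, rK'K ht] <;>
      match_scalars <;> field_simp

theorem rKY : ∀ {n : ℕ} (F : Vn n), piK t n (piY t n F) = t⁻¹ ^ 2 • piY t n (piK t n F) := by
  intro n
  induction n with
  | zero => intro F; simp [piY_zero, piK_zero]
  | succ n ih =>
    intro F
    apply sl_ext <;> simp only [sl0K, sl1K, sl0Y, sl1Y, ih, map_add, map_smul, rKK' ht, rK'K ht] <;>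
      match_scalars <;> field_simp

theorem rK'X {n : ℕ} (F : Vn n) : piK' t n (piX t n F) = t⁻¹ ^ 2 • piX t n (piK' t n F) := by
  have h := congrArg (piK' t n) (rKX ht (piK' t n F))
  rw [rK'K ht, rKK' ht, map_smul] at h
  rw [h, smul_smul]
  simp [← mul_pow, ht]

theorem rK'Y {n : ℕ} (F : Vn n) : piK' t n (piY t n F) = t ^ 2 • piY t n (piK' t n F) := by
  have h := congrArg (piK' t n) (rKY ht (piK' t n F))
  rw [rK'K ht, rKK' ht, map_smul] at h
  rw [h, smul_smul]
  simp [← mul_pow, ht]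

theorem rXY : ∀ {n : ℕ} (F : Vn n),
    (t ^ 2 - t⁻¹ ^ 2) • (piX t n (piY t n F) - piY t n (piX t n F)) =
      piK t n (piK t n F) - piK' t n (piK' t n F)
  | 0, F => by simp [piX_zero, piY_zero, piK_zero, piK'_zero]
  | n + 1, F => by
    have h0 := rXY (sl 0 F)
    have h1 := rXY (sl 1 F)
    apply sl_ext
    · simp only [sl0K, sl1K, sl0K', sl1K', sl0X, sl1X, sl0Y, sl1Y, map_add, map_smul, map_sub,
        rK'X ht, rK'Y ht]
      linear_combination (norm := skip) t ^ 2 • h0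
      match_scalars <;> field_simp <;> ring
    · simp only [sl0K, sl1K, sl0K', sl1K', sl0X, sl1X, sl0Y, sl1Y, map_add, map_smul, map_sub,
        rK'X ht, rK'Y ht]
      linear_combination (norm := skip) t⁻¹ ^ 2 • h1
      match_scalars <;> field_simp <;> ring

end rels

/-! ### Intertwiners -/

/-- Intertwiners between tensor powers. -/
def Inter (t : ℂ) (m k : ℕ) : Submodule ℂ (Vn m →ₗ[ℂ] Vn k) where
  carrier := {f | (∀ F, piX t k (f F) = f (piX t m F)) ∧ (∀ F, piY t k (f F) = f (piY t m F)) ∧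
    (∀ F, piK t k (f F) = f (piK t m F)) ∧ (∀ F, piK' t k (f F) = f (piK' t m F))}
  add_mem' := by
    rintro f g ⟨h1, h2, h3, h4⟩ ⟨k1, k2, k3, k4⟩
    refine ⟨fun F => ?_, fun F => ?_, fun F => ?_, fun F => ?_⟩ <;>
      simp [h1, h2, h3, h4, k1, k2, k3, k4]
  zero_mem' := by simp
  smul_mem' := by
    rintro c f ⟨h1, h2, h3, h4⟩
    refine ⟨fun F => ?_, fun F => ?_, fun F => ?_, fun F => ?_⟩ <;>
      simp [h1, h2, h3, h4]

theorem Inter.comp {t : ℂ} {m k l : ℕ} {f : Vn k →ₗ[ℂ] Vn l} {g : Vn m →ₗ[ℂ] Vn k}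
    (hf : f ∈ Inter t k l) (hg : g ∈ Inter t m k) : f ∘ₗ g ∈ Inter t m l := by
  obtain ⟨h1, h2, h3, h4⟩ := hf
  obtain ⟨k1, k2, k3, k4⟩ := hg
  refine ⟨fun F => ?_, fun F => ?_, fun F => ?_, fun F => ?_⟩ <;>
      simp [h1, h2, h3, h4, k1, k2, k3, k4]

theorem Inter.one {t : ℂ} {m : ℕ} : (1 : Module.End ℂ (Vn m)) ∈ Inter t m m :=
  ⟨fun _ => rfl, fun _ => rfl, fun _ => rfl, fun _ => rfl⟩

theorem Inter.ext {t : ℂ} {m k : ℕ} {f : Vn m →ₗ[ℂ] Vn k}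
    (hf : f ∈ Inter t m k) : ext f ∈ Inter t (m + 1) (k + 1) := by
  obtain ⟨h1, h2, h3, h4⟩ := hf
  refine ⟨fun F => ?_, fun F => ?_, fun F => ?_, fun F => ?_⟩ <;> apply sl_ext <;>
    simp [h1, h2, h3, h4, sl0X, sl1X, sl0Y, sl1Y, sl0K, sl1K, sl0K', sl1K']

theorem Inter.cup {t : ℂ} (ht : t ≠ 0) (m : ℕ) : cup t m ∈ Inter t m (m + 2) := by
  refine ⟨fun F => ?_, fun F => ?_, fun F => ?_, fun F => ?_⟩ <;> apply sl_ext <;> apply sl_ext <;>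
    simp only [sl0_cup, sl1_cup, sl0X, sl1X, sl0Y, sl1Y, sl0K, sl1K, sl0K', sl1K', sl0_mk, sl1_mk,
      map_zero, map_smul, smul_zero, map_add] <;>
    first | (match_scalars <;> field_simp <;> ring) | simp

theorem Inter.cap {t : ℂ} (ht : t ≠ 0) (m : ℕ) : cap t m ∈ Inter t (m + 2) m := by
  refine ⟨fun F => ?_, fun F => ?_, fun F => ?_, fun F => ?_⟩ <;>
    simp only [cap_apply, sl0X, sl1X, sl0Y, sl1Y, sl0K, sl1K, sl0K', sl1K', 
      map_zero, map_smul, smul_zero, map_add, map_sub] <;>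
    match_scalars <;> field_simp <;> ring

/-- The top Temperley-Lieb generator. -/
def E (t : ℂ) (m : ℕ) : Module.End ℂ (Vn (m + 2)) := TL.cup t m ∘ₗ TL.cap t m

theorem E_def (t : ℂ) (m : ℕ) (F) : E t m F = cup t m (cap t m F) := rfl

theorem Inter.E {t : ℂ} (ht : t ≠ 0) (m : ℕ) : E t m ∈ Inter t (m + 2) (m + 2) :=
  Inter.comp (Inter.cup ht m) (Inter.cap ht m)

theorem cap_cup {t : ℂ} {m : ℕ} (F : Vn m) : cap t m (cup t m F) = (-(t ^ 2 + t⁻¹ ^ 2)) • F := by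
  simp only [cap_apply, sl0_cup, sl1_cup, sl0_mk, sl1_mk]
  match_scalars
  linear_combination (t ^ 2 + t⁻¹ ^ 2) * I_mul_I

theorem cup_ext {t : ℂ} {m k : ℕ} (f : Vn m →ₗ[ℂ] Vn k) (F : Vn m) :
    cup t k (f F) = ext (ext f) (cup t m F) := by
  apply sl_ext <;> apply sl_ext <;> simp [sl0_cup, sl1_cup]

theorem cap_ext {t : ℂ} {m k : ℕ} (f : Vn m →ₗ[ℂ] Vn k) (F : Vn (m + 2)) :
    cap t k (ext (ext f) F) = f (cap t m F) := by
  simp [cap_apply]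

theorem zig {t : ℂ} (ht : t ≠ 0) {m : ℕ} (F : Vn (m + 1)) :
    cap t (m + 1) (ext (cup t m) F) = F := by
  have h := I_mul_I
  apply sl_ext <;> simp [cap_apply, sl0_cup, sl1_cup, smul_smul] <;> match_scalars <;> field_simp <;>
    simp

theorem zag {t : ℂ} (ht : t ≠ 0) {m : ℕ} (F : Vn (m + 1)) :
    ext (cap t m) (cup t (m + 1) F) = F := by
  have h := I_mul_I
  apply sl_ext <;> simp [cap_apply, sl0_cup, sl1_cup, smul_smul] <;> match_scalars <;> field_simp <;>
    simp

theorem ext_comp {m k l : ℕ} (f : Vn k →ₗ[ℂ] Vn l) (g : Vn m →ₗ[ℂ] Vn k) (F) :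
    ext (f ∘ₗ g) F = ext f (ext g F) := by
  apply sl_ext <;> simp

theorem E_comm {t : ℂ} {m : ℕ} (f : Module.End ℂ (Vn m)) :
    E t m * extA _ (extA _ f) = extA _ (extA _ f) * E t m := by
  refine LinearMap.ext fun F => ?_
  simp only [Module.End.mul_apply, E_def, extA_apply, cap_ext, cup_ext]

theorem E_sq (t : ℂ) (m : ℕ) : E t m * E t m = (-(t ^ 2 + t⁻¹ ^ 2)) • E t m := by
  refine LinearMap.ext fun F => ?_
  simp only [Module.End.mul_apply, E_def, cap_cup, map_smul, LinearMap.smul_apply]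

theorem EeE {t : ℂ} (ht : t ≠ 0) (m : ℕ) : 
    E t (m + 1) * extA _ (E t m) * E t (m + 1) = E t (m + 1) := by
  refine LinearMap.ext fun F => ?_
  simp only [Module.End.mul_apply, E_def, extA_apply]
  simp only [E, ext_comp, zig ht, zag ht]

theorem eEe {t : ℂ} (ht : t ≠ 0) (m : ℕ) : 
    extA _ (E t m) * E t (m + 1) * extA _ (E t m) = extA _ (E t m) := by
  refine LinearMap.ext fun F => ?_
  simp only [Module.End.mul_apply, E_def, extA_apply]
  simp only [E, ext_comp, zig ht, zag ht]

/-! ### Rotation -/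

/-- Rotation of intertwiners. -/
def rot (t : ℂ) (ht : t ≠ 0) (m k : ℕ) : Inter t m (k + 1) ≃ₗ[ℂ] Inter t (m + 1) k where
  toFun h := ⟨cap t k ∘ₗ ext h.1, Inter.comp (Inter.cap ht k) (Inter.ext h.2)⟩
  invFun g := ⟨ext g.1 ∘ₗ cup t m, Inter.comp (Inter.ext g.2) (Inter.cup ht m)⟩
  map_add' f g := by
    refine Subtype.ext (LinearMap.ext fun F => ?_)
    simp [cap_apply]; module
  map_smul' c g := by
    refine Subtype.ext (LinearMap.ext fun F => ?_)
    simp [cap_apply]; module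
  left_inv h := by
    refine Subtype.ext (LinearMap.ext fun F => ?_)
    apply sl_ext <;> simp [cap_apply, sl0_cup, sl1_cup, smul_smul] <;> match_scalars <;> field_simp <;>
      simp
  right_inv g := by
    refine Subtype.ext (LinearMap.ext fun F => ?_)
    have h : g.1 F = g.1 (mk (sl 0 F, 0)) + g.1 (mk (0, sl 1 F)) := by
      rw [← map_add, ← map_add]; simp [mk_sl]
    simp only [LinearMap.comp_apply, cap_apply, sl0_ext, sl1_ext, sl0_cup, sl1_cup]
    have h1 : ∀ G : Vn m, (mk (0, (-(I * t⁻¹)) • G) : Vn (m+1)) = (-(I * t⁻¹)) • mk (0, G) := by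
      intro G; rw [← map_smul]; simp
    have h2 : ∀ G : Vn m, (mk ((I * t) • G, 0) : Vn (m+1)) = (I * t) • mk (G, 0) := by
      intro G; rw [← map_smul]; simp
    rw [h1, h2, map_smul, map_smul, h]
    match_scalars <;> field_simp <;> simp

/-- The key reduction. -/
theorem mul_E {t : ℂ} (ht : t ≠ 0) {m : ℕ} {f : Module.End ℂ (Vn (m + 2))}
    (hf : f ∈ Inter t (m + 2) (m + 2)) :
    ∃ g : Module.End ℂ (Vn (m + 1)), g ∈ Inter t (m + 1) (m + 1) ∧
      f * E t m = extA _ g * E t m := by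
  let h : Inter t m (m + 2) := ⟨f ∘ₗ cup t m, Inter.comp hf (Inter.cup ht m)⟩
  refine ⟨(rot t ht m (m + 1) h).1, (rot t ht m (m + 1) h).2, ?_⟩
  have h1 := congrArg Subtype.val ((rot t ht m (m + 1)).symm_apply_apply h)
  have h2 : ext (rot t ht m (m + 1) h).1 ∘ₗ cup t m = f ∘ₗ cup t m := h1
  refine LinearMap.ext fun F => ?_
  exact (LinearMap.congr_fun h2 (cap t m F)).symm

/-! ### Quantum integers -/

section qi
variable {t : ℂ} (ht : t ≠ 0) (hroot : ∀ k : ℕ, 0 < k → t ^ k ≠ 1)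
include ht hroot

theorem zpow_inj' {a b : ℤ} (h : t ^ a = t ^ b) : a = b := by
  have key : ∀ c : ℤ, t ^ c = 1 → c = 0 := by
    intro c hc
    by_contra hne
    apply hroot c.natAbs (Int.natAbs_pos.2 hne)
    rcases Int.natAbs_eq c with h | h
    · rw [h, zpow_natCast] at hc; exact hc
    · rw [h, zpow_neg, zpow_natCast, inv_eq_one] at hc; exact hc
  have : t ^ (a - b) = 1 := by rw [zpow_sub₀ ht, h, div_self (zpow_ne_zero _ ht)]
  have := key _ this
  omega

theorem d_ne : t ^ 2 - t⁻¹ ^ 2 ≠ 0 := by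
  intro h
  have h1 : t ^ (2 : ℤ) = t ^ (-2 : ℤ) := by
    have : t ^ 2 = t⁻¹ ^ 2 := sub_eq_zero.1 h
    rw [zpow_neg]; simpa using this
  have := zpow_inj' ht hroot h1
  omega

theorem qint_ne {n : ℤ} (hn : n ≠ 0) : qint t n ≠ 0 := by
  unfold qint
  refine div_ne_zero (fun h => ?_) (d_ne ht hroot)
  have := zpow_inj' ht hroot (sub_eq_zero.1 h)
  omega

theorem qint_rec (k l : ℤ) :
    qint t k * qint t (l - k + 1) + qint t (l - 2 * k) = qint t (k + 1) * qint t (l - k) := by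
  have hd := d_ne ht hroot
  unfold qint
  have e1 : t ^ (2 * (l - k + 1)) = t ^ (2 * l) * (t ^ (2 * k))⁻¹ * t ^ 2 := by
    rw [← zpow_neg, ← zpow_add₀ ht, ← zpow_natCast t 2, ← zpow_add₀ ht]; congr 1; push_cast; ring
  have e2 : t ^ (2 * (l - 2 * k)) = t ^ (2 * l) * ((t ^ (2 * k))⁻¹) ^ 2 := by
    rw [← zpow_neg, ← zpow_natCast (t ^ (-(2*k))) 2, ← zpow_mul, ← zpow_add₀ ht]
    congr 1; push_cast; ring
  have e3 : t ^ (2 * (k + 1)) = t ^ (2 * k) * t ^ 2 := by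
    rw [← zpow_natCast t 2, ← zpow_add₀ ht]; congr 1; push_cast; ring
  have e4 : t ^ (2 * (l - k)) = t ^ (2 * l) * (t ^ (2 * k))⁻¹ := by
    rw [← zpow_neg, ← zpow_add₀ ht]; congr 1; ring
  simp only [zpow_neg, e1, e2, e3, e4]
  have ha : t ^ (2 * k) ≠ 0 := zpow_ne_zero _ ht
  have hb : t ^ (2 * l) ≠ 0 := zpow_ne_zero _ ht
  generalize t ^ (2 * k) = a at *
  generalize t ^ (2 * l) = b at *
  rw [div_mul_div_comm, div_mul_div_comm, div_add_div _ _ (mul_ne_zero hd hd) hd,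
    div_eq_div_iff (mul_ne_zero (mul_ne_zero hd hd) hd) (mul_ne_zero hd hd)]
  field_simp
  ring

/-! ### Highest weight vectors -/

variable {V : Type*} [AddCommGroup V] [Module ℂ V] {X Y K K' : Module.End ℂ V}
  (hKY : ∀ F, K (Y F) = t⁻¹ ^ 2 • Y (K F)) (hK'Y : ∀ F, K' (Y F) = t ^ 2 • Y (K' F))
  (hXY : ∀ F, (t ^ 2 - t⁻¹ ^ 2) • (X (Y F) - Y (X F)) = K (K F) - K' (K' F))
  {v : V} {l : ℤ} (hX : X v = 0) (hK : K v = t ^ l • v) (hK' : K' v = t ^ (-l) • v)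

include hKY hK in
theorem hwK (k : ℕ) : K ((Y ^ k) v) = t ^ (l - 2 * k) • (Y ^ k) v := by
  induction k with
  | zero => simpa using hK
  | succ k ih =>
    rw [pow_succ', Module.End.mul_apply, hKY, ih, map_smul, smul_smul]
    congr 1
    rw [inv_pow, ← zpow_natCast t 2, ← zpow_neg, ← zpow_add₀ ht]
    congr 1; push_cast; ring

include hK'Y hK' in
theorem hwK' (k : ℕ) : K' ((Y ^ k) v) = t ^ (-(l - 2 * k)) • (Y ^ k) v := by
  induction k with
  | zero => simpa using hK'
  | succ k ih =>
    rw [pow_succ', Module.End.mul_apply, hK'Y, ih, map_smul, smul_smul]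
    congr 1
    rw [← zpow_natCast t 2, ← zpow_add₀ ht]
    congr 1; push_cast; ring

include hKY hK'Y hXY hX hK hK' in
theorem hwX (k : ℕ) : X ((Y ^ (k + 1)) v) = (qint t (k + 1) * qint t (l - k)) • (Y ^ k) v := by
  have hd := d_ne ht hroot
  have comm : ∀ k : ℕ, X (Y ((Y ^ k) v)) = Y (X ((Y ^ k) v)) + qint t (l - 2 * k) • (Y ^ k) v := by
    intro k
    have h := hXY ((Y ^ k) v)
    rw [hwK ht hroot hKY hK, hwK' ht hroot hK'Y hK', map_smul, map_smul,
      hwK ht hroot hKY hK, hwK' ht hroot hK'Y hK', smul_smul, smul_smul, ← sub_smul,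
      ← zpow_add₀ ht, ← zpow_add₀ ht] at h
    have h2 := congrArg (fun z => (t ^ 2 - t⁻¹ ^ 2)⁻¹ • z) h
    simp only [smul_smul, inv_mul_cancel₀ hd, one_smul] at h2
    rw [sub_eq_iff_eq_add'] at h2
    rw [h2, qint, div_eq_inv_mul]
    congr 4 <;> ring_nf
  induction k with
  | zero =>
    have h := comm 0
    simp only [pow_zero, Module.End.one_apply, hX, map_zero, zero_add] at h
    have h1 : qint t 1 = 1 := by
      unfold qint
      rw [div_eq_one_iff_eq hd]
      simp [zpow_neg] <;> norm_cast
    simpa [h1] using h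
  | succ k ih =>
    rw [pow_succ', Module.End.mul_apply, comm, ih, map_smul, ← Module.End.mul_apply, ← pow_succ',
      ← add_smul]
    congr 1
    have := qint_rec ht hroot (k + 1) l
    push_cast at *
    rw [← this]
    congr 3; ring

include hKY hK'Y hXY hX hK hK' in
theorem hw_ne (hv : v ≠ 0) (k : ℕ) (hk : ∀ j : ℕ, j < k → l ≠ j) : (Y ^ k) v ≠ 0 := by
  induction k with
  | zero => simpa using hv
  | succ k ih =>
    intro h
    have h1 := hwX ht hroot hKY hK'Y hXY hX hK hK' k
    rw [h, map_zero, eq_comm, smul_eq_zero] at h1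
    rcases h1 with h1 | h1
    · refine mul_ne_zero (qint_ne ht hroot ?_) (qint_ne ht hroot ?_) h1
      · omega
      · have := hk k (by omega); omega
    · exact ih (fun j hj => hk j (by omega)) h1

include hKY hK'Y hXY hX hK hK' in
theorem hw_indep (hv : v ≠ 0) {ι : Type*} (φ : ι → ℕ) (hφ : Function.Injective φ)
    (h : ∀ i (j : ℕ), j < φ i → l ≠ j) : LinearIndependent ℂ (fun i => (Y ^ φ i) v) := by
  refine Module.End.eigenvectors_linearIndependent' K (fun i => t ^ (l - 2 * (φ i : ℤ))) ?_ _ ?_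
  · intro i j hij
    have := zpow_inj' ht hroot hij
    exact hφ (by omega)
  · intro i
    exact Module.End.hasEigenvector_iff.2 ⟨Module.End.mem_eigenspace_iff.2
      (hwK ht hroot hKY hK _), hw_ne ht hroot hKY hK'Y hXY hX hK hK' hv _ (h i)⟩

include hKY hK'Y hXY hX hK hK' in
theorem hw_zero [FiniteDimensional ℂ V] (hl : l < 0) : v = 0 := by
  by_contra hv
  have := hw_indep ht hroot hKY hK'Y hXY hX hK hK' hv (fun i : ℕ => i) (fun _ _ h => h)
    (fun i j _ => by omega)
  exact Infinite.not_finite (α := ℕ) (this.finite)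

end qi

/-! ### Generators -/

/-- The Temperley-Lieb generators. -/
def gens (t : ℂ) (n : ℕ) : Set (Module.End ℂ (Vn n)) :=
  {f : Module.End ℂ (Vn n) | ∃ (i : ℕ) (h : i + 1 < n), f = TLE t n i h}

theorem gens_ext {t : ℂ} {n : ℕ} {g} (hg : g ∈ gens t n) : extA n g ∈ gens t (n + 1) := by
  obtain ⟨i, h, rfl⟩ := hg
  exact ⟨i, by omega, (TLE_ext t n i h _).symm⟩

theorem E_gens (t : ℂ) (m : ℕ) : E t m ∈ gens t (m + 2) :=
  ⟨m, by omega, (TLE_top t m _).symm⟩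

theorem gens_cases {t : ℂ} {m : ℕ} {f} (hf : f ∈ gens t (m + 2)) :
    f = E t m ∨ ∃ g ∈ gens t (m + 1), f = extA _ g := by
  obtain ⟨i, h, rfl⟩ := hf
  by_cases hi : i = m
  · subst hi; exact Or.inl (TLE_top t i _)
  · exact Or.inr ⟨_, ⟨i, by omega, rfl⟩, TLE_ext t (m + 1) i (by omega) _⟩

theorem gens_induction {t : ℂ} {C : ∀ n, Module.End ℂ (Vn n) → Prop}
    (hE : ∀ m, C (m + 2) (E t m)) (hext : ∀ n g, C n g → C (n + 1) (extA n g)) :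
    ∀ n f, f ∈ gens t n → C n f
  | 0, _, ⟨_, h, _⟩ => by omega
  | 1, _, ⟨_, h, _⟩ => by omega
  | m + 2, f, hf => by
    rcases gens_cases hf with rfl | ⟨g, hg, rfl⟩
    · exact hE m
    · exact hext _ _ (gens_induction hE hext (m + 1) g hg)

/-- The Temperley-Lieb algebra. -/
def TLA (t : ℂ) (n : ℕ) : Subalgebra ℂ (Module.End ℂ (Vn n)) := Algebra.adjoin ℂ (gens t n)

theorem TLA_ext {t : ℂ} {n : ℕ} {g} (hg : g ∈ TLA t n) : extA n g ∈ TLA t (n + 1) := by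
  have h : (TLA t n).map (extA n) ≤ TLA t (n + 1) := by
    unfold TLA
    rw [AlgHom.map_adjoin]
    apply Algebra.adjoin_mono
    rintro _ ⟨g, hg, rfl⟩
    exact gens_ext hg
  exact h ⟨g, hg, rfl⟩

theorem E_TLA (t : ℂ) (m : ℕ) : E t m ∈ TLA t (m + 2) := Algebra.subset_adjoin (E_gens t m)

theorem TLA_inter {t : ℂ} (ht : t ≠ 0) {n : ℕ} {f} (hf : f ∈ TLA t n) : f ∈ Inter t n n := by
  induction hf using Algebra.adjoin_induction with
  | mem x hx =>
    exact gens_induction (C := fun n f => f ∈ Inter t n n) (fun m => Inter.E ht m)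
      (fun n g hg => Inter.ext hg) n x hx
  | algebraMap r =>
    rw [Algebra.algebraMap_eq_smul_one]
    exact (Inter t n n).smul_mem _ Inter.one
  | add x y _ _ hx hy => exact (Inter t n n).add_mem hx hy
  | mul x y _ _ hx hy => exact Inter.comp hx hy

/-! ### The top vector and the joint kernel -/

/-- The highest weight vector. -/
def vtop (n : ℕ) : Vn n := fun u => if u = 0 then 1 else 0

theorem snoc_eq_zero {n : ℕ} (u : Fin n → Fin 2) (a : Fin 2) :
    (Fin.snoc u a : Fin (n + 1) → Fin 2) = 0 ↔ u = 0 ∧ a = 0 := by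
  constructor
  · intro h
    refine ⟨funext fun i => ?_, ?_⟩
    · simpa using congrFun h i.castSucc
    · simpa using congrFun h (Fin.last n)
  · rintro ⟨rfl, rfl⟩
    funext i
    refine Fin.lastCases ?_ (fun i => ?_) i <;> simp

theorem sl0_vtop (n : ℕ) : sl 0 (vtop (n + 1)) = vtop n := by
  funext u; simp [sl_apply, vtop, snoc_eq_zero]
theorem sl1_vtop (n : ℕ) : sl 1 (vtop (n + 1)) = 0 := by
  funext u; simp [sl_apply, vtop, snoc_eq_zero]

theorem vtop_ne (n : ℕ) : vtop n ≠ 0 := by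
  intro h; simpa [vtop] using congrFun h 0

theorem X_vtop (t : ℂ) (n : ℕ) : piX t n (vtop n) = 0 := by
  induction n with
  | zero => exact piX_zero t _
  | succ n ih => apply sl_ext <;> simp [sl0X, sl1X, sl0_vtop, sl1_vtop, ih]

theorem K_vtop {t : ℂ} (ht : t ≠ 0) (n : ℕ) : piK t n (vtop n) = t ^ (n : ℤ) • vtop n := by
  induction n with
  | zero => simp [piK_zero]
  | succ n ih =>
    apply sl_ext <;> simp [sl0K, sl1K, sl0_vtop, sl1_vtop, ih, smul_smul]
    congr 1
    norm_cast
    ring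

theorem K'_vtop {t : ℂ} (ht : t ≠ 0) (n : ℕ) : piK' t n (vtop n) = t ^ (-(n : ℤ)) • vtop n := by
  have h := congrArg (piK' t n) (K_vtop ht n)
  rw [rK'K ht, map_smul] at h
  rw [zpow_neg]
  nth_rewrite 2 [h]
  rw [smul_smul, inv_mul_cancel₀ (zpow_ne_zero _ ht), one_smul]

theorem cap_vtop (t : ℂ) (m : ℕ) : cap t m (vtop (m + 2)) = 0 := by
  simp [cap_apply, sl0_vtop, sl1_vtop]

theorem gens_vtop (t : ℂ) (n : ℕ) (f) (hf : f ∈ gens t n) : f (vtop n) = 0 :=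
  gens_induction (C := fun n f => f (vtop n) = 0) (fun m => by rw [E_def, cap_vtop, map_zero])
    (fun n g hg => by apply sl_ext <;> simp [extA_apply, sl0_vtop, sl1_vtop, hg]) n f hf

/-- Joint kernel of the generators. -/
def NN (t : ℂ) (n : ℕ) : Submodule ℂ (Vn n) where
  carrier := {F | ∀ f ∈ gens t n, f F = 0}
  add_mem' := by intro a b ha hb f hf; rw [map_add, ha f hf, hb f hf, add_zero]
  zero_mem' := by intro f _; exact map_zero f
  smul_mem' := by intro c a ha f hf; rw [map_smul, ha f hf, smul_zero]

theorem NN_sl {t : ℂ} {n : ℕ} {F} (hF : F ∈ NN t (n + 1)) :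
    sl 0 F ∈ NN t n ∧ sl 1 F ∈ NN t n := by
  refine ⟨fun f hf => ?_, fun f hf => ?_⟩
  · have := congrArg (sl 0) (hF _ (gens_ext hf))
    simpa [extA_apply] using this
  · have := congrArg (sl 1) (hF _ (gens_ext hf))
    simpa [extA_apply] using this

theorem NN_cap {t : ℂ} (ht : t ≠ 0) {m : ℕ} {F} (hF : F ∈ NN t (m + 2)) : cap t m F = 0 := by
  have h := congrArg (fun z => sl 0 (sl 1 z)) (hF _ (E_gens t m))
  simpa [E_def, sl1_cup, ht] using h

theorem NN_zero {t : ℂ} (ht : t ≠ 0) : ∀ (m : ℕ) (F : Vn (m + 1)), F ∈ NN t (m + 1) →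
    sl 1 F = 0 → F 0 = 0 → F = 0 := by
  intro m
  have e : ∀ n (F : Vn (n + 1)), sl 0 F 0 = F 0 := by
    intro n F
    rw [sl_apply, (snoc_eq_zero _ _).2 ⟨rfl, rfl⟩]
  induction m with
  | zero =>
    intro F _ h1 h0
    apply sl_ext
    · funext u
      rw [Subsingleton.elim u 0, e, h0]; simp
    · simpa using h1
  | succ m ih =>
    intro F hF h1 h0
    have hc := NN_cap ht hF
    rw [cap_apply, h1] at hc
    have : sl 1 (sl 0 F) = 0 := by simpa [ht] using hc
    have h2 := ih (sl 0 F) (NN_sl hF).1 this (by rw [e, h0])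
    apply sl_ext
    · simpa using h2
    · simpa using h1

theorem NN_finrank {t : ℂ} (ht : t ≠ 0) (n : ℕ) : Module.finrank ℂ (NN t n) ≤ n + 1 := by
  induction n with
  | zero =>
    refine (Submodule.finrank_le _).trans ?_
    simp
  | succ n ih =>
    let L : NN t (n + 1) →ₗ[ℂ] (NN t n × ℂ) := LinearMap.prod
      (LinearMap.codRestrict (NN t n) (sl 1 ∘ₗ (NN t (n + 1)).subtype) (fun F => (NN_sl F.2).2))
      (LinearMap.proj 0 ∘ₗ (NN t (n + 1)).subtype)
    have hL : Function.Injective L := by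
      rw [← LinearMap.ker_eq_bot, LinearMap.ker_eq_bot']
      rintro ⟨F, hF⟩ h
      have h1 : sl 1 F = 0 := congrArg (fun z => (z.1 : Vn n)) h
      have h2 : F 0 = 0 := congrArg Prod.snd h
      exact Subtype.ext (NN_zero ht n F hF h1 h2)
    have := LinearMap.finrank_le_finrank_of_injective hL
    rw [Module.finrank_prod, Module.finrank_self] at this
    omega

theorem kill_NN {t : ℂ} (ht : t ≠ 0) (hroot : ∀ k : ℕ, 0 < k → t ^ k ≠ 1) {n : ℕ}
    {g : Module.End ℂ (Vn n)} (hg : g ∈ Inter t n n) (hv : g (vtop n) = 0) {F} (hF : F ∈ NN t n) :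
    g F = 0 := by
  have hY : ∀ k f, f ∈ Inter t n n → f (vtop n) = 0 → f ((piY t n ^ k) (vtop n)) = 0 := by
    intro k f hf h0
    induction k with
    | zero => simpa using h0
    | succ k ih => rw [pow_succ', Module.End.mul_apply, ← hf.2.1, ih, map_zero]
  have hind := hw_indep ht hroot (fun F => rKY ht F) (fun F => rK'Y ht F) (fun F => rXY ht F)
    (X_vtop t n) (K_vtop ht n) (K'_vtop ht n) (vtop_ne n) (fun i : Fin (n + 1) => (i : ℕ))
    Fin.val_injective (fun i j h => by have := i.2; omega)
  have hle : Submodule.span ℂ (Set.range fun i : Fin (n + 1) => (piY t n ^ (i : ℕ)) (vtop n))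
      ≤ NN t n := by
    rw [Submodule.span_le]
    rintro _ ⟨i, rfl⟩ f hf
    exact hY i f (TLA_inter ht (Algebra.subset_adjoin hf)) (gens_vtop t n f hf)
  have heq := Submodule.eq_of_le_of_finrank_le hle (by
    rw [finrank_span_eq_card hind, Fintype.card_fin]; exact NN_finrank ht n)
  rw [← heq] at hF
  have : Submodule.span ℂ (Set.range fun i : Fin (n + 1) => (piY t n ^ (i : ℕ)) (vtop n))
      ≤ LinearMap.ker g := by
    rw [Submodule.span_le]
    rintro _ ⟨i, rfl⟩
    exact hY i g hg hv
  exact this hF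

/-- number of ones -/
def ones {n : ℕ} (u : Fin n → Fin 2) : ℕ := (Finset.univ.filter (fun k => u k = 1)).card

theorem prod_kD {t : ℂ} (ht : t ≠ 0) {n : ℕ} (u : Fin n → Fin 2) :
    ∏ k, kD t (u k) = t ^ ((n : ℤ) - 2 * (ones u : ℤ)) := by
  have h : ∀ a : Fin 2, kD t a = t * (if a = 1 then t ^ (-2 : ℤ) else 1) := by
    intro a; fin_cases a
    · simp
    · simp [zpow_neg] <;> field_simp <;> norm_cast
  simp only [h, Finset.prod_mul_distrib, Finset.prod_const, Finset.card_univ, Fintype.card_fin,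
    ← Finset.prod_filter]
  rw [← ones, ← zpow_natCast, ← zpow_natCast, ← zpow_mul, ← zpow_add₀ ht]
  congr 1

theorem inter_vtop {t : ℂ} (ht : t ≠ 0) (hroot : ∀ k : ℕ, 0 < k → t ^ k ≠ 1) {n : ℕ}
    {f : Module.End ℂ (Vn n)} (hf : f ∈ Inter t n n) : ∃ c : ℂ, f (vtop n) = c • vtop n := by
  refine ⟨f (vtop n) 0, ?_⟩
  funext u
  by_cases hu : u = 0
  · subst hu; simp [vtop]
  · have h := congrFun (hf.2.2.1 (vtop n)) u
    rw [K_vtop ht, map_smul, piK, ptwiseMul_apply, prod_kD ht] at h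
    simp only [Pi.smul_apply, smul_eq_mul, vtop, hu, if_false, mul_zero]
    rcases mul_eq_mul_right_iff.1 h with h | h
    · exfalso
      have := zpow_inj' ht hroot h
      have h1 : ones u = 0 := by omega
      rw [ones, Finset.card_eq_zero, Finset.filter_eq_empty_iff] at h1
      apply hu
      funext k
      have := h1 (Finset.mem_univ k)
      change u k = 0
      omega
    · exact h

/-! ### Jones-Wenzl -/

/-- Coefficients. -/
def bb (t : ℂ) : ℕ → ℂ
  | 0 => -(t ^ 2 + t⁻¹ ^ 2)
  | m + 1 => -(t ^ 2 + t⁻¹ ^ 2) - (bb t m)⁻¹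

theorem bb_eq {t : ℂ} (ht : t ≠ 0) (hroot : ∀ k : ℕ, 0 < k → t ^ k ≠ 1) (m : ℕ) :
    bb t m = -(qint t (m + 2) / qint t (m + 1)) ∧ bb t m ≠ 0 := by
  have h1 : ∀ k : ℕ, qint t (k + 1) ≠ 0 := fun k => qint_ne ht hroot (by omega)
  have h2 : ∀ k : ℕ, qint t (k + 2) ≠ 0 := fun k => qint_ne ht hroot (by omega)
  suffices h : bb t m = -(qint t (m + 2) / qint t (m + 1)) from
    ⟨h, by rw [h]; exact neg_ne_zero.2 (div_ne_zero (h2 m) (h1 m))⟩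
  have hd := d_ne ht hroot
  have hr : ∀ k : ℤ, qint t (k + 2) = (t ^ 2 + t⁻¹ ^ 2) * qint t (k + 1) - qint t k := by
    intro k
    unfold qint
    rw [mul_div_assoc', ← sub_div]
    congr 1
    have e1 : t ^ (2 * (k + 2)) = t ^ (2 * k) * t ^ 4 := by
      rw [← zpow_natCast t 4, ← zpow_add₀ ht]; congr 1; push_cast; ring
    have e2 : t ^ (2 * (k + 1)) = t ^ (2 * k) * t ^ 2 := by
      rw [← zpow_natCast t 2, ← zpow_add₀ ht]; congr 1; push_cast; ring
    simp only [zpow_neg, e1, e2]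
    have ha : t ^ (2 * k) ≠ 0 := zpow_ne_zero _ ht
    generalize t ^ (2 * k) = a at *
    field_simp
    ring
  induction m with
  | zero =>
    have := hr 0
    have h0 : qint t 0 = 0 := by simp [qint]
    have h1 : qint t 1 = 1 := by
      unfold qint
      rw [div_eq_one_iff_eq hd]
      simp [zpow_neg] <;> norm_cast
    simp only [zero_add, h0, h1, mul_one, sub_zero] at this
    simp [bb, this, h1]
  | succ m ih =>
    rw [bb, ih]
    have a1 := h1 m
    have a2 := h2 m
    have := hr (m + 1)
    have e : (m : ℤ) + 1 + 1 = m + 2 := by ring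
    rw [e] at this
    push_cast
    rw [e, this]
    field_simp
    ring

/-- Jones-Wenzl idempotents. -/
def P (t : ℂ) : (n : ℕ) → Module.End ℂ (Vn n)
  | 0 => 1
  | 1 => 1
  | m + 2 => extA _ (P t (m + 1)) -
      (bb t m)⁻¹ • (extA _ (P t (m + 1)) * E t m * extA _ (P t (m + 1)))

theorem P_succ (t : ℂ) (m : ℕ) : P t (m + 2) = extA _ (P t (m + 1)) -
      (bb t m)⁻¹ • (extA _ (P t (m + 1)) * E t m * extA _ (P t (m + 1))) := rfl

section JW
variable {t : ℂ} (ht : t ≠ 0) (hroot : ∀ k : ℕ, 0 < k → t ^ k ≠ 1)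
include ht hroot

theorem P_props (m : ℕ) : P t (m + 1) * P t (m + 1) = P t (m + 1) ∧
    E t m * extA _ (P t (m + 1)) * E t m = bb t m • (extA _ (extA _ (P t m)) * E t m) ∧
    extA _ (P t m) * P t (m + 1) = P t (m + 1) := by
  induction m with
  | zero =>
    refine ⟨by simp [P], ?_, by simp [P]⟩
    simp [P, bb, E_sq]
  | succ m ih =>
    obtain ⟨i1, i2, i3⟩ := ih
    have hb := (bb_eq ht hroot m).2
    have hA : extA _ (P t (m + 1)) * extA _ (P t (m + 1)) = extA _ (P t (m + 1)) := by
      rw [← map_mul, i1]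
    have hAA : extA _ (extA _ (P t (m + 1))) * extA _ (extA _ (P t (m + 1)))
      = extA _ (extA _ (P t (m + 1))) := by
      rw [← map_mul, hA]
    have hBA : extA _ (extA _ (P t m)) * extA _ (P t (m + 1)) = extA _ (P t (m + 1)) := by
      rw [← map_mul, i3]
    have hEB := E_comm (t := t) (P t m)
    refine ⟨?_, ?_, ?_⟩
    · have key : extA _ (P t (m + 1)) * E t m * extA _ (P t (m + 1)) *
          (extA _ (P t (m + 1)) * E t m * extA _ (P t (m + 1))) =
          bb t m • (extA _ (P t (m + 1)) * E t m * extA _ (P t (m + 1))) := by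
        generalize extA _ (P t (m + 1)) = A at *
        generalize extA _ (extA _ (P t m)) = B at *
        calc A * E t m * A * (A * E t m * A) = A * (E t m * (A * A) * E t m) * A := by
              simp only [mul_assoc]
          _ = A * (bb t m • (B * E t m)) * A := by rw [hA, i2]
          _ = bb t m • (A * E t m * (B * A)) := by
              rw [← hEB]; simp only [mul_smul_comm, smul_mul_assoc, mul_assoc]
          _ = _ := by rw [hBA]
      rw [P_succ, sub_mul, mul_sub, mul_sub, smul_mul_smul_comm, key, hA, mul_smul_comm,
        smul_mul_assoc, ← mul_assoc, ← mul_assoc, hA, mul_assoc _ _ (extA _ (P t (m + 1))), 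
        mul_assoc _ _ (extA _ (P t (m + 1))), mul_assoc _ _ (extA _ (P t (m + 1))), hA]
      match_scalars <;> field_simp <;> ring
    · rw [P_succ, map_sub, map_smul, map_mul, map_mul]
      have h1 := E_comm (t := t) (P t (m + 1))
      have h2 := E_sq t (m + 1)
      have h3 := EeE ht m
      generalize extA _ (extA _ (P t (m + 1))) = A at *
      generalize extA _ (E t m) = e at *
      generalize E t (m + 1) = E' at *
      have k1 : E' * A * E' = (-(t ^ 2 + t⁻¹ ^ 2)) • (A * E') := by
        rw [h1, mul_assoc, h2, mul_smul_comm]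
      have k2 : E' * (A * e * A) * E' = A * E' := by
        calc E' * (A * e * A) * E' = (E' * A) * e * (A * E') := by simp only [mul_assoc]
          _ = (A * E') * e * (E' * A) := by rw [h1]
          _ = A * (E' * e * E') * A := by simp only [mul_assoc]
          _ = A * A * E' := by rw [h3, mul_assoc, h1, mul_assoc]
          _ = _ := by rw [hAA]
      rw [mul_sub, sub_mul, mul_smul_comm, smul_mul_assoc, k1, k2, bb]
      exact (sub_smul _ _ _).symm
    · rw [P_succ, mul_sub, mul_smul_comm, ← mul_assoc, ← mul_assoc, hA]

theorem P_kill : ∀ (n : ℕ) (f) (_ : f ∈ gens t n), f * P t n = 0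
  | 0, _, ⟨_, h, _⟩ => by omega
  | 1, _, ⟨_, h, _⟩ => by omega
  | m + 2, f, hf => by
    obtain ⟨i1, i2, i3⟩ := P_props ht hroot m
    have hb := (bb_eq ht hroot m).2
    rcases gens_cases hf with rfl | ⟨g, hg, rfl⟩
    · rw [P_succ, mul_sub, mul_smul_comm, ← mul_assoc, ← mul_assoc, i2, ← E_comm,
        smul_mul_assoc, smul_smul, inv_mul_cancel₀ hb, one_smul, mul_assoc, ← map_mul, i3, sub_self]
    · have := P_kill (m + 1) g hg
      rw [P_succ, mul_sub, mul_smul_comm, ← mul_assoc, ← mul_assoc, ← map_mul, this]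
      simp

omit ht hroot in
theorem P_vtop : ∀ n : ℕ, P t n (vtop n) = vtop n
  | 0 => rfl
  | 1 => rfl
  | m + 2 => by
    have h := P_vtop (m + 1)
    have h1 : extA _ (P t (m + 1)) (vtop (m + 2)) = vtop (m + 2) := by
      apply sl_ext <;> simp [extA_apply, sl0_vtop, sl1_vtop, h]
    have h2 : E t m (vtop (m + 2)) = 0 := by rw [E_def, cap_vtop, map_zero]
    simp only [P_succ, LinearMap.sub_apply, LinearMap.smul_apply, Module.End.mul_apply, h1, h2,
      map_zero, smul_zero, sub_zero]

omit ht hroot in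
theorem P_TLA : ∀ n : ℕ, P t n ∈ TLA t n
  | 0 => one_mem _
  | 1 => one_mem _
  | m + 2 => by
    have h := TLA_ext (P_TLA (m + 1))
    exact sub_mem h (Subalgebra.smul_mem _ (mul_mem (mul_mem h (E_TLA t m)) h) _)

omit hroot in
theorem one_sub_P (m : ℕ) : ∀ (M : Submodule ℂ (Module.End ℂ (Vn (m + 2)))),
    (∀ x ∈ TLA t (m + 2), ∀ z ∈ M, x * z ∈ M) → (∀ x ∈ TLA t (m + 2), ∀ z ∈ M, z * x ∈ M) →
    E t m ∈ M → 1 - P t (m + 2) ∈ M := by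
  induction m with
  | zero =>
    intro M hl hr hE
    have : 1 - P t 2 = (bb t 0)⁻¹ • E t 0 := by simp [P]
    rw [this]
    exact M.smul_mem _ hE
  | succ m ih =>
    intro M hl hr hE
    have h := TLA_ext (P_TLA (t := t) (m + 2))
    have e := TLA_ext (E_TLA t m)
    have h1 : 1 - P t (m + 2) ∈ M.comap (extA (m + 2)).toLinearMap := by
      apply ih
      · intro x hx z hz
        change extA _ (x * z) ∈ M
        rw [map_mul]
        exact hl _ (TLA_ext hx) _ hz
      · intro x hx z hz
        change extA _ (z * x) ∈ M
        rw [map_mul]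
        exact hr _ (TLA_ext hx) _ hz
      · change extA _ (E t m) ∈ M
        rw [← eEe ht]
        exact hr _ e _ (hl _ e _ hE)
    have h2 : extA (m + 2) (1 - P t (m + 2)) ∈ M := h1
    have h3 : 1 - P t (m + 3) = extA (m + 2) (1 - P t (m + 2)) + 
        (bb t (m + 1))⁻¹ • (extA _ (P t (m + 2)) * E t (m + 1) * extA _ (P t (m + 2))) := by
      rw [P_succ, map_sub, map_one]; abel
    rw [h3]
    exact M.add_mem h2 (M.smul_mem _ (hr _ h _ (hl _ h _ hE)))

theorem mul_P {n : ℕ} {f : Module.End ℂ (Vn n)} (hf : f ∈ Inter t n n) : f * P t n ∈ TLA t n := by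
  obtain ⟨c, hc⟩ := inter_vtop ht hroot hf
  have hg : f - c • 1 ∈ Inter t n n := (Inter t n n).sub_mem hf ((Inter t n n).smul_mem _ Inter.one)
  have h0 : (f - c • 1) (vtop n) = 0 := by simp [hc]
  have : f * P t n = c • P t n := by
    refine LinearMap.ext fun F => ?_
    have hF : P t n F ∈ NN t n := fun g hg => LinearMap.congr_fun (P_kill ht hroot n g hg) F
    have := kill_NN ht hroot hg h0 hF
    simpa [sub_eq_zero] using this
  rw [this]
  exact Subalgebra.smul_mem _ (P_TLA n) c

theorem inter_TLA (m : ℕ) : ∀ f ∈ Inter t (m + 1) (m + 1), f ∈ TLA t (m + 1) := by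
  induction m with
  | zero =>
    intro f hf
    have := mul_P ht hroot hf
    simpa [P] using this
  | succ m ih =>
    intro f hf
    let M : Submodule ℂ (Module.End ℂ (Vn (m + 2))) :=
      { carrier := {z | ∀ f ∈ Inter t (m + 2) (m + 2), f * z ∈ TLA t (m + 2)}
        add_mem' := by
          intro a b ha hb f hf
          rw [mul_add]; exact add_mem (ha f hf) (hb f hf)
        zero_mem' := by intro f _; rw [mul_zero]; exact zero_mem _
        smul_mem' := by
          intro c a ha f hf
          rw [mul_smul_comm]; exact Subalgebra.smul_mem _ (ha f hf) c }
    have hM : 1 - P t (m + 2) ∈ M := by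
      apply one_sub_P ht
      · intro x hx z hz f hf
        rw [← mul_assoc]
        exact hz _ (Inter.comp hf (TLA_inter ht hx))
      · intro x hx z hz f hf
        rw [← mul_assoc]
        exact mul_mem (hz f hf) hx
      · intro f hf
        obtain ⟨g, hg, h⟩ := mul_E ht hf
        rw [h]
        exact mul_mem (TLA_ext (ih g hg)) (E_TLA t m)
    have h1 := hM f hf
    have h2 := mul_P ht hroot hf
    have : f = f * (1 - P t (m + 2)) + f * P t (m + 2) := by rw [← mul_add, sub_add_cancel, mul_one]
    rw [this]
    exact add_mem h1 h2

end JW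

/-! ### Dimension -/

theorem ptwiseX (t : ℂ) (n : ℕ) (F : Vn n) (u) : piX t n F u = ∑ i : Fin n,
    ((if u i = 0 then 1 else 0) *
        (∏ k ∈ Finset.univ.filter (fun k => k < i), kD' t (u k)) *
        (∏ k ∈ Finset.univ.filter (fun k => i < k), kD t (u k))) * F (Function.update u i 1) := by
  simp [piX, ptwiseMul_apply, LinearMap.funLeft_apply]

theorem ptwiseY (t : ℂ) (n : ℕ) (F : Vn n) (u) : piY t n F u = ∑ i : Fin n,
    ((if u i = 1 then 1 else 0) *
        (∏ k ∈ Finset.univ.filter (fun k => k < i), kD' t (u k)) *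
        (∏ k ∈ Finset.univ.filter (fun k => i < k), kD t (u k))) * F (Function.update u i 0) := by
  simp [piY, ptwiseMul_apply, LinearMap.funLeft_apply]

theorem XY_transpose (t : ℂ) (n : ℕ) (a b : Fin n → Fin 2) :
    piX t n (Pi.single b 1) a = piY t n (Pi.single a 1) b := by
  rw [ptwiseX, ptwiseY]
  refine Finset.sum_congr rfl fun i _ => ?_
  by_cases h : a i = 0 ∧ b = Function.update a i 1
  · obtain ⟨h0, rfl⟩ := h
    have e1 : Function.update (Function.update a i 1) i 0 = a := by
      rw [Function.update_idem, ← h0, Function.update_eq_self]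
    rw [e1]
    simp only [h0, Function.update_self, if_true, Pi.single_eq_same]
    congr 2
    · congr 1
      refine Finset.prod_congr rfl fun k hk => ?_
      have : k ≠ i := by rintro rfl; simp at hk
      rw [Function.update_of_ne this]
    · refine Finset.prod_congr rfl fun k hk => ?_
      have : k ≠ i := by rintro rfl; simp at hk
      rw [Function.update_of_ne this]
  · have hL : (if a i = 0 then (1:ℂ) else 0) * (Pi.single b 1 : Vn n) (Function.update a i 1) = 0 := by
      by_cases h0 : a i = 0
      · have : Function.update a i 1 ≠ b := fun e => h ⟨h0, e.symm⟩
        simp [Pi.single_apply, this]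
      · simp [h0]
    have hR : (if b i = 1 then (1:ℂ) else 0) * (Pi.single a 1 : Vn n) (Function.update b i 0) = 0 := by
      by_cases h0 : b i = 1
      · have : Function.update b i 0 ≠ a := by
          rintro rfl
          apply h
          constructor
          · simp
          · rw [Function.update_idem, ← h0, Function.update_eq_self]
        simp [Pi.single_apply, this]
      · simp [h0]
    generalize (if a i = 0 then (1:ℂ) else 0) = x at *
    generalize (if b i = 1 then (1:ℂ) else 0) = y at *
    linear_combination (∏ k ∈ Finset.univ.filter (fun k => k < i), kD' t (a k)) *
        (∏ k ∈ Finset.univ.filter (fun k => i < k), kD t (a k)) * hL -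
      (∏ k ∈ Finset.univ.filter (fun k => k < i), kD' t (b k)) *
        (∏ k ∈ Finset.univ.filter (fun k => i < k), kD t (b k)) * hR

theorem mat_transpose (t : ℂ) (n : ℕ) :
    (LinearMap.toMatrix' (piX t n)).transpose = LinearMap.toMatrix' (piY t n) := by
  ext a b
  rw [Matrix.transpose_apply, LinearMap.toMatrix'_apply, LinearMap.toMatrix'_apply]
  have := XY_transpose t n b a
  simpa [Pi.single] using this

/-- multi-indices with `j` ones -/
abbrev Ix (N j : ℕ) := {u : Fin N → Fin 2 // ones u = j}

theorem card_Ix (N j : ℕ) : Fintype.card (Ix N j) = N.choose j := by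
  have e : Ix N j ≃ {s : Finset (Fin N) // s.card = j} :=
    { toFun := fun u => ⟨Finset.univ.filter (fun k => u.1 k = 1), u.2⟩
      invFun := fun s => ⟨fun k => if k ∈ s.1 then 1 else 0, by
        have := s.2
        simp [ones, this]⟩
      left_inv := by
        rintro ⟨u, hu⟩
        ext k
        have : u k = 0 ∨ u k = 1 := by omega
        rcases this with h | h <;> simp [h]
      right_inv := by
        rintro ⟨s, hs⟩
        ext k
        simp }
  rw [Fintype.card_congr e, Fintype.card_finset_len, Fintype.card_fin]

/-- extension by zero -/
def ex0 (N j : ℕ) : (Ix N j → ℂ) →ₗ[ℂ] Vn N where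
  toFun g u := if h : ones u = j then g ⟨u, h⟩ else 0
  map_add' f g := by funext u; by_cases h : ones u = j <;> simp [h]
  map_smul' c g := by funext u; by_cases h : ones u = j <;> simp [h]

theorem ex0_apply (N j : ℕ) (g : Ix N j → ℂ) (u : Ix N j) : ex0 N j g u.1 = g u := by
  simp [ex0, u.2]

theorem ex0_not (N j : ℕ) (g : Ix N j → ℂ) {u} (h : ones u ≠ j) : ex0 N j g u = 0 := by
  simp [ex0, h]

theorem ex0_inj (N j : ℕ) : Function.Injective (ex0 N j) := by
  intro f g h
  funext u
  rw [← ex0_apply N j f, h, ex0_apply]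

theorem ex0_res (N j : ℕ) (F : Vn N) (h : ∀ u, ones u ≠ j → F u = 0) :
    ex0 N j (fun u => F u.1) = F := by
  funext u
  by_cases hu : ones u = j
  · simp [ex0, hu]
  · rw [ex0_not _ _ _ hu, h u hu]

section wt
variable {t : ℂ} (ht : t ≠ 0) (hroot : ∀ k : ℕ, 0 < k → t ^ k ≠ 1)
include ht

theorem K_supp {N j : ℕ} {F : Vn N} (h : ∀ u, ones u ≠ j → F u = 0) :
    piK t N F = t ^ ((N : ℤ) - 2 * (j : ℤ)) • F := by
  funext u
  rw [piK, ptwiseMul_apply, prod_kD ht]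
  by_cases hu : ones u = j
  · simp [hu]
  · simp [h u hu]

theorem K'_of_K {N : ℕ} {l : ℤ} {F : Vn N} (h : piK t N F = t ^ l • F) :
    piK' t N F = t ^ (-l) • F := by
  have := congrArg (piK' t N) h
  rw [rK'K ht, map_smul] at this
  conv_rhs => rw [this]
  rw [smul_smul, ← zpow_add₀ ht]; simp

include hroot

theorem supp_K {N j : ℕ} {F : Vn N} (h : piK t N F = t ^ ((N : ℤ) - 2 * (j : ℤ)) • F) :
    ∀ u, ones u ≠ j → F u = 0 := by
  intro u hu
  have := congrFun h u
  rw [piK, ptwiseMul_apply, prod_kD ht, Pi.smul_apply, smul_eq_mul] at this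
  by_contra hF
  have := zpow_inj' ht hroot (mul_right_cancel₀ hF this)
  omega

theorem X_supp {N j : ℕ} {F : Vn N} (h : ∀ u, ones u ≠ j + 1 → F u = 0) :
    ∀ u, ones u ≠ j → piX t N F u = 0 := by
  apply supp_K ht hroot
  rw [rKX ht, K_supp ht h, map_smul, smul_smul, ← zpow_natCast t 2, ← zpow_add₀ ht]
  congr 2; push_cast; ring

theorem Y_supp {N j : ℕ} {F : Vn N} (h : ∀ u, ones u ≠ j → F u = 0) :
    ∀ u, ones u ≠ j + 1 → piY t N F u = 0 := by
  apply supp_K ht hroot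
  rw [rKY ht, K_supp ht h, map_smul, smul_smul, inv_pow, ← zpow_natCast t 2, ← zpow_neg,
    ← zpow_add₀ ht]
  congr 2; push_cast; ring

theorem X_wt_zero {N : ℕ} {v : Vn N} {l : ℤ} (hl : l < 0) (hX : piX t N v = 0)
    (hK : piK t N v = t ^ l • v) : v = 0 :=
  hw_zero ht hroot (X := piX t N) (Y := piY t N) (K := piK t N) (K' := piK' t N)
    (fun F => rKY ht F) (fun F => rK'Y ht F) (fun F => rXY ht F) hX hK (K'_of_K ht hK) hl

theorem Y_wt_zero {N : ℕ} {v : Vn N} {l : ℤ} (hl : 0 < l) (hY : piY t N v = 0)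
    (hK : piK t N v = t ^ l • v) : v = 0 :=
  hw_zero ht hroot (X := piY t N) (Y := piX t N) (K := piK' t N) (K' := piK t N) (l := -l)
    (fun F => rK'X ht F) (fun F => rKX ht F)
    (fun F => by
      rw [← neg_sub (piX t N (piY t N F)), smul_neg, rXY ht F, neg_sub]) hY (K'_of_K ht hK)
    (by simpa using hK) (by omega)

omit ht hroot in
theorem block_mulVec {N : ℕ} (f : Module.End ℂ (Vn N)) (a b : ℕ) (g : Ix N b → ℂ) (u : Ix N a) :
    ((LinearMap.toMatrix' f).submatrix (Subtype.val : Ix N a → _)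
      (Subtype.val : Ix N b → _)).mulVec g u = f (ex0 N b g) u.1 := by
  have h : f (ex0 N b g) = (LinearMap.toMatrix' f).mulVec (ex0 N b g) := by
    rw [LinearMap.toMatrix'_mulVec]
  rw [h]
  simp only [Matrix.mulVec, dotProduct, Matrix.submatrix_apply]
  rw [← Finset.sum_subset (Finset.subset_univ (Finset.univ.filter fun v => ones v = b))]
  · rw [Finset.sum_subtype (p := fun v => ones v = b) _ (by simp)]
    refine Finset.sum_congr rfl fun v _ => ?_
    rw [ex0_apply]
  · intro v _ hv
    rw [ex0_not, mul_zero]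
    simpa using hv

theorem dim_ker (m : ℕ) :
    Module.finrank ℂ (LinearMap.ker (((LinearMap.toMatrix' (piX t (2 * (m + 1)))).submatrix
      (Subtype.val : Ix (2 * (m + 1)) m → _)
      (Subtype.val : Ix (2 * (m + 1)) (m + 1) → _)).mulVecLin)) =
      (2 * (m + 1)).choose (m + 1) - (2 * (m + 1)).choose m := by
  set M := ((LinearMap.toMatrix' (piX t (2 * (m + 1)))).submatrix
      (Subtype.val : Ix (2 * (m + 1)) m → _)
      (Subtype.val : Ix (2 * (m + 1)) (m + 1) → _)) with hM
  have hinj : Function.Injective M.transpose.mulVecLin := by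
    rw [← LinearMap.ker_eq_bot, LinearMap.ker_eq_bot']
    intro g hg
    rw [hM, Matrix.transpose_submatrix, mat_transpose] at hg
    have hsupp : ∀ u, ones u ≠ m → ex0 (2 * (m + 1)) m g u = 0 := fun u hu => ex0_not _ _ _ hu
    have hY : piY t _ (ex0 (2 * (m + 1)) m g) = 0 := by
      funext u
      by_cases hu : ones u = m + 1
      · have := congrFun hg ⟨u, hu⟩
        rw [Matrix.mulVecLin_apply, block_mulVec] at this
        exact this
      · exact Y_supp ht hroot hsupp u hu
    have := Y_wt_zero ht hroot (l := 2) (by norm_num) hY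
      (by rw [K_supp ht hsupp]; congr 2; push_cast; ring)
    exact ex0_inj _ _ (by rw [this, map_zero])
  have h1 : M.transpose.rank = (2 * (m + 1)).choose m := by
    rw [Matrix.rank, LinearMap.finrank_range_of_inj hinj, Module.finrank_fintype_fun_eq_card,
      card_Ix]
  rw [Matrix.rank_transpose, Matrix.rank] at h1
  have h2 := LinearMap.finrank_range_add_finrank_ker M.mulVecLin
  rw [h1, Module.finrank_fintype_fun_eq_card, card_Ix] at h2
  omega

omit ht hroot in
theorem choose_catalan (m : ℕ) : (2 * (m + 1)).choose (m + 1) - (2 * (m + 1)).choose m =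
    (2 * (m + 1)).choose (m + 1) / (m + 1 + 1) := by
  have h := Nat.choose_succ_right_eq (2 * (m + 1)) m
  have e : 2 * (m + 1) - m = m + 2 := by omega
  rw [e] at h
  generalize (2 * (m + 1)).choose (m + 1) = a at *
  generalize (2 * (m + 1)).choose m = b at *
  symm
  apply Nat.div_eq_of_eq_mul_left (by omega)
  have hb : b ≤ a := by nlinarith
  obtain ⟨c, rfl⟩ := Nat.exists_eq_add_of_le hb
  have : b + c - b = c := by omega
  rw [this]
  nlinarith

/-- The constant vector in degree zero. -/
def one0 : Vn 0 := fun _ => 1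

/-- evaluation at the constant vector -/
def ev0 (N : ℕ) : (Vn 0 →ₗ[ℂ] Vn N) →ₗ[ℂ] Vn N := LinearMap.applyₗ one0

omit ht hroot in
theorem Vn0_eq (F : Vn 0) : F = F (fun i => i.elim0) • one0 := by
  funext u
  have : u = fun i => i.elim0 := Subsingleton.elim _ _
  simp [this, one0]

omit ht hroot in
theorem ev0_inj (N : ℕ) : Function.Injective (ev0 N) := by
  intro f g h
  refine LinearMap.ext fun F => ?_
  rw [Vn0_eq F, map_smul, map_smul]
  congr 1

theorem map_eq (m : ℕ) : (Inter t 0 (2 * (m + 1))).map (ev0 (2 * (m + 1))) =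
    (LinearMap.ker (((LinearMap.toMatrix' (piX t (2 * (m + 1)))).submatrix
      (Subtype.val : Ix (2 * (m + 1)) m → _)
      (Subtype.val : Ix (2 * (m + 1)) (m + 1) → _)).mulVecLin)).map
      (ex0 (2 * (m + 1)) (m + 1)) := by
  apply le_antisymm
  · rintro _ ⟨f, ⟨h1, h2, h3, h4⟩, rfl⟩
    have hX : piX t _ (f one0) = 0 := by rw [h1, piX_zero, map_zero]
    have hK : piK t _ (f one0) = f one0 := by rw [h3, piK_zero]
    have hs : ∀ u, ones u ≠ m + 1 → f one0 u = 0 := by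
      apply supp_K ht hroot
      rw [hK]; push_cast; simp
    refine ⟨fun u => f one0 u.1, ?_, ex0_res _ _ _ hs⟩
    rw [SetLike.mem_coe, LinearMap.mem_ker]
    funext u
    rw [Matrix.mulVecLin_apply, block_mulVec, ex0_res _ _ _ hs, hX]
    rfl
  · rintro _ ⟨g, hg, rfl⟩
    rw [SetLike.mem_coe, LinearMap.mem_ker] at hg
    set w := ex0 (2 * (m + 1)) (m + 1) g with hw
    have hs : ∀ u, ones u ≠ m + 1 → w u = 0 := fun u hu => ex0_not _ _ _ hu
    have hX : piX t _ w = 0 := by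
      funext u
      by_cases hu : ones u = m
      · have := congrFun hg ⟨u, hu⟩
        rw [Matrix.mulVecLin_apply, block_mulVec] at this
        exact this
      · exact X_supp ht hroot hs u hu
    have hK : piK t _ w = w := by
      rw [K_supp ht hs]; push_cast; simp
    have hK' : piK' t _ w = w := by
      have := K'_of_K ht (l := 0) (by simpa using hK)
      simpa using this
    have hXY := rXY ht w
    rw [hK, hK, hK', hK', hX, map_zero, sub_self, sub_zero, smul_eq_zero] at hXY
    have hXY := hXY.resolve_left (d_ne ht hroot)
    have hY : piY t _ w = 0 := by
      apply X_wt_zero ht hroot (l := -2) (by norm_num) hXY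
      rw [rKY ht, hK, inv_pow, zpow_neg]
      rfl
    refine ⟨LinearMap.toSpanSingleton ℂ _ w ∘ₗ LinearMap.proj (fun i => i.elim0), ?_, ?_⟩
    · refine ⟨fun F => ?_, fun F => ?_, fun F => ?_, fun F => ?_⟩ <;>
        simp [hX, hY, hK, hK', piX_zero, piY_zero, piK_zero, piK'_zero]
    · simp [ev0, one0]

theorem dim_Inter0 (m : ℕ) : Module.finrank ℂ (Inter t 0 (2 * (m + 1))) =
    (2 * (m + 1)).choose (m + 1) / (m + 1 + 1) := by
  rw [← choose_catalan, ← dim_ker ht hroot,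
    (Submodule.equivMapOfInjective _ (ev0_inj (2 * (m + 1))) _).finrank_eq, map_eq ht hroot,
    ← (Submodule.equivMapOfInjective _ (ex0_inj (2 * (m + 1)) (m + 1)) _).finrank_eq]

omit hroot in
theorem dim_rot (m : ℕ) : ∀ k, Module.finrank ℂ (Inter t m k) =
    Module.finrank ℂ (Inter t 0 (k + m)) := by
  induction m with
  | zero => intro k; rfl
  | succ m ih =>
    intro k
    rw [← (rot t ht m k).finrank_eq, ih, Nat.add_right_comm, Nat.add_assoc]

theorem dim_Inter (m : ℕ) : Module.finrank ℂ (Inter t (m + 1) (m + 1)) =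
    (2 * (m + 1)).choose (m + 1) / (m + 1 + 1) := by
  rw [dim_rot ht, ← two_mul, dim_Inter0 ht hroot]

theorem dim_TLA (m : ℕ) : Module.finrank ℂ (TLA t (m + 1)) =
    (2 * (m + 1)).choose (m + 1) / (m + 1 + 1) := by
  have h : Subalgebra.toSubmodule (TLA t (m + 1)) = Inter t (m + 1) (m + 1) := by
    ext f
    exact ⟨fun h => TLA_inter ht h, fun h => inter_TLA ht hroot m f h⟩
  rw [← dim_Inter ht hroot, ← h]
  rfl

end wt

theorem centralizer_iff {t : ℂ} {n : ℕ} {π : At t →ₐ[ℂ] Module.End ℂ (Vn n)} (hπ : IsPi t n π)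
    (f : Module.End ℂ (Vn n)) :
    f ∈ Subalgebra.centralizer ℂ (Set.range ⇑π) ↔ f ∈ Inter t n n := by
  obtain ⟨h1, h2, h3, h4⟩ := hπ
  rw [Subalgebra.mem_centralizer_iff]
  constructor
  · intro h
    refine ⟨fun F => ?_, fun F => ?_, fun F => ?_, fun F => ?_⟩
    · exact LinearMap.congr_fun (h _ ⟨_, h1⟩) F
    · exact LinearMap.congr_fun (h _ ⟨_, h2⟩) F
    · exact LinearMap.congr_fun (h _ ⟨_, h3⟩) F
    · exact LinearMap.congr_fun (h _ ⟨_, h4⟩) F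
  · rintro ⟨k1, k2, k3, k4⟩ _ ⟨a, rfl⟩
    obtain ⟨b, rfl⟩ := RingQuot.mkAlgHom_surjective ℂ (QRel t) a
    induction b using FreeAlgebra.induction with
    | grade0 r =>
      rw [AlgHom.commutes, AlgHom.commutes]
      exact Algebra.commutes r f
    | grade1 x =>
      cases x with
      | X => change π (aX t) * f = f * π (aX t); rw [h1]; exact LinearMap.ext k1
      | Y => change π (aY t) * f = f * π (aY t); rw [h2]; exact LinearMap.ext k2
      | K => change π (aK t) * f = f * π (aK t); rw [h3]; exact LinearMap.ext k3
      | K' => change π (aK' t) * f = f * π (aK' t); rw [h4]; exact LinearMap.ext k4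
    | mul a b iha ihb =>
      rw [map_mul, map_mul, mul_assoc, ihb, ← mul_assoc, iha, mul_assoc]
    | add a b iha ihb =>
      rw [map_add, map_add, add_mul, iha, ihb, mul_add]

end TL

/-- The unital subalgebra of `End((ℂ²)^{⊗n})` generated by
`E_1, …, E_{n−1}` is exactly `End_{Aₜ}((ℂ²)^{⊗n})`, the commutant of the `Aₜ`-action,
and it has dimension the Catalan number `C_n = (1/(n+1))·binom(2n,n)`. -/
theorem stmt10 (t : ℂ) (ht : t ≠ 0) (hroot : ∀ k : ℕ, 0 < k → t ^ k ≠ 1) (n : ℕ)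
    (hn : 1 ≤ n) (π : At t →ₐ[ℂ] Module.End ℂ (Vn n)) (hπ : IsPi t n π) :
    Algebra.adjoin ℂ {f : Module.End ℂ (Vn n) | ∃ (i : ℕ) (h : i + 1 < n), f = TLE t n i h}
        = Subalgebra.centralizer ℂ (Set.range ⇑π) ∧
      Module.finrank ℂ
        (Algebra.adjoin ℂ
          {f : Module.End ℂ (Vn n) | ∃ (i : ℕ) (h : i + 1 < n), f = TLE t n i h})
        = (2 * n).choose n / (n + 1) := by
  obtain ⟨m, rfl⟩ : ∃ m, n = m + 1 := ⟨n - 1, by omega⟩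
  refine ⟨?_, TL.dim_TLA ht hroot m⟩
  change TL.TLA t (m + 1) = _
  ext f
  rw [TL.centralizer_iff hπ]
  exact ⟨fun h => TL.TLA_inter ht h, fun h => TL.inter_TLA ht hroot m f h⟩

end
end
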